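/- arXiv:2111.05496 — 8 statements merged into one kernel-verified Lean document; each statement's English description precedes it below -/
import Mathlib

section
/- Suppose the loss is the squared loss ℓ(ŷ, y) = ‖ŷ − y‖² and Assumption 1 holds (Σ_{n=1}^N v_L^n (y^n)^T ≠ 0 and Σ_{n=1}^N v_L^n (v_L^n)^T is invertible). Then the fixed-feature ResNEst empirical risk R(W_L, W_{L+1}) = (1/N) Σ_{n=1}^N ℓ(W_{L+1}(u^n + W_L v_L^n), y^n), viewed as a function on the product space ℝ^{M×K_L} × ℝ^{N_o×M}, is neither convex nor concave. -/
/-!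
A concave function that is bounded below on a whole vector space is constant, hence convex. The
risk is nonnegative, so it suffices to show that it is not convex. Up to a positive factor it is
`‖L B + β A B - Y‖ ^ 2`, where `L B` stacks the vectors `B u^n`, the bilinear part `β A B` stacks
the vectors `B A v^n`, and `Y` stacks the targets. By the parallelogram law, convexity on the
segment from `(A, B)` to `(-A, -B)` gives `2 ⟪β A B, Y⟫ ≤ ‖L B‖ ^ 2 + ‖β A B‖ ^ 2`. Replacing `B`
by `t B`, dividing by `t > 0` and letting `t` tend to `0` gives `⟪β A B, Y⟫ ≤ 0`, and the sign of
`A` is free, so `⟪β A B, Y⟫ = 0` for all `A` and `B`. For matrix units `A` and `B` this inner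
product is an entry of `∑ n, v^n (y^n)ᵀ`.
-/

open scoped RealInnerProductSpace Matrix
open Set Filter Topology

lemma nonpos_of_forall_le_mul {p q : ℝ} (h : ∀ t ∈ Ioc (0 : ℝ) 1, p ≤ t * q) : p ≤ 0 := by
  have hlim : Tendsto (fun t : ℝ ↦ t * q) (𝓝[>] 0) (𝓝 0) :=
    ((continuous_mul_const q).tendsto' 0 0 (zero_mul q)).mono_left nhdsWithin_le_nhds
  exact ge_of_tendsto hlim (mem_of_superset (Ioc_mem_nhdsGT zero_lt_one) h)

section Convex

variable {E : Type*} [AddCommGroup E] [Module ℝ E] {f : E → ℝ}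

lemma two_mul_map_zero_le_of_convexOn_univ (hf : ConvexOn ℝ univ f) (x : E) :
    2 * f 0 ≤ f x + f (-x) := by
  have h := hf.2 (mem_univ x) (mem_univ (-x)) one_half_pos.le one_half_pos.le (add_halves 1)
  rw [smul_neg, add_neg_cancel, smul_eq_mul, smul_eq_mul] at h
  linarith

lemma le_of_concaveOn_univ_of_bddBelow (hf : ConcaveOn ℝ univ f) (hb : BddBelow (range f))
    (x y : E) : f x ≤ f y := by
  obtain ⟨c, hc⟩ := hb
  refine sub_nonpos.1 (nonpos_of_forall_le_mul (q := f x - c) fun t ⟨ht, ht1⟩ ↦ ?_)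
  -- `y` divides the segment from `x` to the far point `z` in the ratio `t : 1 - t`.
  set z := x + t⁻¹ • (y - x) with hz
  have hy : (1 - t) • x + t • z = y := by
    rw [hz, smul_add, smul_inv_smul₀ ht.ne']
    module
  have hconc := hf.2 (mem_univ x) (mem_univ z) (sub_nonneg.2 ht1) ht.le (sub_add_cancel 1 t)
  rw [hy, smul_eq_mul, smul_eq_mul] at hconc
  have hcz : t * c ≤ t * f z := mul_le_mul_of_nonneg_left (hc (mem_range_self z)) ht.le
  linarith

lemma convexOn_univ_of_concaveOn_of_bddBelow (hf : ConcaveOn ℝ univ f) (hb : BddBelow (range f)) :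
    ConvexOn ℝ univ f := by
  have hconst : f = fun _ ↦ f 0 := funext fun x ↦
    (le_of_concaveOn_univ_of_bddBelow hf hb x 0).antisymm
      (le_of_concaveOn_univ_of_bddBelow hf hb 0 x)
  rw [hconst]
  exact convexOn_const _ convex_univ

end Convex

section BilinearLeastSquares

variable {E F G : Type*} [NormedAddCommGroup E] [InnerProductSpace ℝ E]
  [AddCommGroup F] [Module ℝ F] [AddCommGroup G] [Module ℝ G]
  {L : G →ₗ[ℝ] E} {β : F →ₗ[ℝ] G →ₗ[ℝ] E} {y : E}

lemma two_mul_inner_le_of_convexOn_norm_sq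
    (h : ConvexOn ℝ univ fun p : F × G ↦ ‖L p.2 + β p.1 p.2 - y‖ ^ 2) (x : F) (w : G) :
    2 * ⟪β x w, y⟫ ≤ ‖L w‖ ^ 2 + ‖β x w‖ ^ 2 := by
  have hmid : 2 * ‖y‖ ^ 2 ≤ ‖L w + (β x w - y)‖ ^ 2 + ‖L w - (β x w - y)‖ ^ 2 := by
    have hneg : ‖-L w + (β x w - y)‖ = ‖L w - (β x w - y)‖ := by
      rw [neg_add_eq_sub, norm_sub_rev]
    simpa [hneg, add_sub_assoc] using two_mul_map_zero_le_of_convexOn_univ h (x, w)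
  have hpar := parallelogram_law_with_norm ℝ (L w) (β x w - y)
  have hsq := norm_sub_sq_real (β x w) y
  linarith

lemma inner_nonpos_of_convexOn_norm_sq
    (h : ConvexOn ℝ univ fun p : F × G ↦ ‖L p.2 + β p.1 p.2 - y‖ ^ 2) (x : F) (w : G) :
    ⟪β x w, y⟫ ≤ 0 := by
  suffices 2 * ⟪β x w, y⟫ ≤ 0 by linarith
  refine nonpos_of_forall_le_mul (q := ‖L w‖ ^ 2 + ‖β x w‖ ^ 2) fun t ⟨ht, _⟩ ↦ ?_
  have hscaled := two_mul_inner_le_of_convexOn_norm_sq h x (t • w)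
  simp only [map_smul, real_inner_smul_left, norm_smul, mul_pow, Real.norm_eq_abs, sq_abs]
    at hscaled
  refine le_of_mul_le_mul_left ?_ ht
  linarith

lemma inner_eq_zero_of_convexOn_norm_sq
    (h : ConvexOn ℝ univ fun p : F × G ↦ ‖L p.2 + β p.1 p.2 - y‖ ^ 2) (x : F) (w : G) :
    ⟪β x w, y⟫ = 0 := by
  have hneg := inner_nonpos_of_convexOn_norm_sq h (-x) w
  rw [map_neg, LinearMap.neg_apply, inner_neg_left, neg_nonpos] at hneg
  exact (inner_nonpos_of_convexOn_norm_sq h x w).antisymm hneg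

end BilinearLeastSquares

section FixedFeatureRisk

variable {ι k m o : Type*} [Fintype k]

/-- The action of the last residual matrix `A` on all feature vectors: sample `n` of the result is
`A *ᵥ v n`. It is linear in `A`, which makes the network output bilinear plus linear in `(A, B)`. -/
def residualOutput (v : ι → k → ℝ) : Matrix m k ℝ →ₗ[ℝ] ι → m → ℝ :=
  LinearMap.pi fun n ↦ (Matrix.mulVecBilin ℝ ℝ).flip (v n)

@[simp]
lemma residualOutput_apply (v : ι → k → ℝ) (A : Matrix m k ℝ) (n : ι) :
    residualOutput v A n = A *ᵥ v n :=
  rfl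

variable [Fintype m]

/-- The outputs `B *ᵥ x n` of a linear last layer `B` on all samples `x`, stacked into one Euclidean
vector so that the sum of the squared losses becomes a single squared norm. It is linear in the
samples and in the layer, and the index `(n, j)` is coordinate `j` of the output on sample `n`. -/
def stackedOutput : (ι → m → ℝ) →ₗ[ℝ] Matrix o m ℝ →ₗ[ℝ] EuclideanSpace ℝ (ι × o) :=
  LinearMap.mk₂ ℝ (fun x B ↦ WithLp.toLp 2 fun q ↦ (B *ᵥ x q.1) q.2)
    (fun _ _ _ ↦ by ext; simp [Matrix.mulVec_add])
    (fun _ _ _ ↦ by ext; simp [Matrix.mulVec_smul])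
    (fun _ _ _ ↦ by ext; simp [Matrix.add_mulVec])
    (fun _ _ _ ↦ by ext; simp [Matrix.smul_mulVec])

@[simp]
lemma stackedOutput_apply (x : ι → m → ℝ) (B : Matrix o m ℝ) (q : ι × o) :
    stackedOutput x B q = (B *ᵥ x q.1) q.2 :=
  rfl

variable [Fintype ι] [Fintype o]

/-- The fixed-feature ResNEst empirical risk under the squared loss, at the pair `(W_L, W_{L+1})`.
The fixed part `∑_{i<L} W_i v_i^n` of the residual representation enters only as the vector
`u n`. -/
noncomputable def fixedFeatureRisk (u : ι → m → ℝ) (v : ι → k → ℝ) (y : ι → o → ℝ)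
    (p : Matrix m k ℝ × Matrix o m ℝ) : ℝ :=
  1 / (Fintype.card ι : ℝ) * ∑ n, ∑ j, ((p.2 *ᵥ (u n + p.1 *ᵥ v n)) j - y n j) ^ 2

variable {u : ι → m → ℝ} {v : ι → k → ℝ} {y : ι → o → ℝ}

lemma fixedFeatureRisk_nonneg (p : Matrix m k ℝ × Matrix o m ℝ) :
    0 ≤ fixedFeatureRisk u v y p := by
  unfold fixedFeatureRisk
  positivity

lemma card_smul_fixedFeatureRisk [Nonempty ι] (p : Matrix m k ℝ × Matrix o m ℝ) :
    (Fintype.card ι : ℝ) • fixedFeatureRisk u v y p =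
      ‖stackedOutput u p.2 + (stackedOutput ∘ₗ residualOutput v) p.1 p.2 -
        WithLp.toLp 2 fun q ↦ y q.1 q.2‖ ^ 2 := by
  have hcard : (Fintype.card ι : ℝ) ≠ 0 := Nat.cast_ne_zero.2 Fintype.card_ne_zero
  rw [fixedFeatureRisk, smul_eq_mul, ← mul_assoc, mul_one_div_cancel hcard, one_mul]
  simp [EuclideanSpace.real_norm_sq_eq, Fintype.sum_prod_type, Matrix.mulVec_add]

lemma inner_stackedOutput_residualOutput_single [DecidableEq k] [DecidableEq m] [DecidableEq o]
    (i : m) (a : k) (j : o) :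
    ⟪stackedOutput (residualOutput v (Matrix.single i a 1)) (Matrix.single j i 1),
      WithLp.toLp 2 fun q ↦ y q.1 q.2⟫ = (∑ n, Matrix.vecMulVec (v n) (y n)) a j := by
  simp [PiLp.inner_apply, Fintype.sum_prod_type, Matrix.sum_apply, Matrix.vecMulVec_apply,
    Matrix.single_mulVec, Function.update_apply, mul_comm]

theorem not_convexOn_fixedFeatureRisk [Nonempty m] (h : ∑ n, Matrix.vecMulVec (v n) (y n) ≠ 0) :
    ¬ ConvexOn ℝ univ (fixedFeatureRisk u v y) := by
  classical
  intro hconv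
  have : Nonempty ι := by
    by_contra! hι
    exact h (Finset.sum_of_isEmpty _)
  have hsq := hconv.smul (Nat.cast_nonneg (Fintype.card ι))
  simp only [card_smul_fixedFeatureRisk] at hsq
  obtain ⟨i⟩ := ‹Nonempty m›
  refine h (Matrix.ext fun a j ↦ ?_)
  rw [← inner_stackedOutput_residualOutput_single i a j]
  exact inner_eq_zero_of_convexOn_norm_sq hsq (Matrix.single i a 1) (Matrix.single j i 1)

theorem resnest_fixed_feature_risk_nonconvex_nonconcave_general [Nonempty m]
    (h : ∑ n, Matrix.vecMulVec (v n) (y n) ≠ 0) :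
    ¬ ConvexOn ℝ univ (fixedFeatureRisk u v y) ∧
      ¬ ConcaveOn ℝ univ (fixedFeatureRisk u v y) := by
  have hbdd : BddBelow (range (fixedFeatureRisk u v y)) :=
    ⟨0, forall_mem_range.2 fixedFeatureRisk_nonneg⟩
  exact ⟨not_convexOn_fixedFeatureRisk h, fun hconc ↦
    not_convexOn_fixedFeatureRisk h (convexOn_univ_of_concaveOn_of_bddBelow hconc hbdd)⟩

end FixedFeatureRisk

theorem resnest_fixed_feature_risk_nonconvex_nonconcave
    (N L M No : ℕ) (hN : 0 < N) (hL : 1 ≤ L) (hM : 0 < M) (hNo : 0 < No)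
    (K : ℕ → ℕ)
    -- fixed matrices W_i ∈ ℝ^{M×K_i}, i = 0, …, L−1
    (W : (i : ℕ) → Matrix (Fin M) (Fin (K i)) ℝ)
    -- feature vectors v_i^n ∈ ℝ^{K_i} and targets y^n ∈ ℝ^{N_o}
    (v : (i : ℕ) → Fin N → Fin (K i) → ℝ)
    (y : Fin N → Fin No → ℝ)
    -- u^n = Σ_{i=0}^{L−1} W_i v_i^n
    (u : Fin N → Fin M → ℝ)
    (hu : ∀ n, u n = ∑ i ∈ Finset.range L, (W i).mulVec (v i n))
    -- squared loss ℓ(yhat, y) = ‖yhat − y‖²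
    (ℓ : (Fin No → ℝ) → (Fin No → ℝ) → ℝ)
    (hℓ : ∀ yhat yy, ℓ yhat yy = ∑ j, (yhat j - yy j) ^ 2)
    -- fixed-feature ResNEst empirical risk
    (R : Matrix (Fin M) (Fin (K L)) ℝ × Matrix (Fin No) (Fin M) ℝ → ℝ)
    (hR : ∀ p, R p =
      (1 / (N : ℝ)) * ∑ n, ℓ (p.2.mulVec (u n + p.1.mulVec (v L n))) (y n))
    -- Assumption 1: Σ_n v_L^n (y^n)^T ≠ 0 and Σ_n v_L^n (v_L^n)^T invertible
    (hA1 : (Matrix.of fun k j => ∑ n, v L n k * y n j :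
        Matrix (Fin (K L)) (Fin No) ℝ) ≠ 0)
    (hA1' : IsUnit (Matrix.of fun k k' => ∑ n, v L n k * v L n k' :
        Matrix (Fin (K L)) (Fin (K L)) ℝ)) :
    ¬ ConvexOn ℝ Set.univ R ∧ ¬ ConcaveOn ℝ Set.univ R := by
  have : Nonempty (Fin M) := ⟨⟨0, hM⟩⟩
  have hrisk : R = fixedFeatureRisk u (v L) y := funext fun p ↦ by
    simp only [hR, hℓ, fixedFeatureRisk, Fintype.card_fin]
  have hcross : ∑ n, Matrix.vecMulVec (v L n) (y n) ≠ 0 := by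
    convert hA1
    ext a j
    simp [Matrix.sum_apply, Matrix.vecMulVec_apply]
  exact hrisk ▸ resnest_fixed_feature_risk_nonconvex_nonconcave_general hcross
end

section
/- Suppose the loss is the squared loss ℓ(ŷ, y) = ‖ŷ − y‖² and Assumption 1 holds. Then every critical point of the fixed-feature ResNEst empirical risk R (i.e., every point where the Fréchet derivative of R vanishes) that is not a local minimizer of R is also not a local maximizer of R; that is, every critical point of R that is not a local minimizer is a saddle point. -/
/-!
STATEMENT 1: Under the squared loss and Assumption 1, every critical point of the
fixed-feature ResNEst empirical risk `R` that is not a local minimizer is a saddle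
point (i.e., not a local maximizer either).
-/

attribute [local instance] Matrix.normedAddCommGroup Matrix.normedSpace

/-!
At a local maximizer the residuals cannot move along any line on which they are affine, by the
parallelogram law. Moving `W_{L+1}` alone forces every input `u^n + W_L v_L^n` of the last layer to
vanish; moving `W_L` alone forces `W_{L+1} = 0`, because some `v_L^n` is nonzero. But once the
inputs vanish the risk does not depend on `W_{L+1}`, so all nearby values of `W_{L+1}` give local
maximizers as well, and they cannot all be zero.
-/

open Filter Topology Matrix WithLp

theorem eq_zero_of_sum_norm_sq_add_le_of_sum_norm_sq_sub_le {F ι : Type*} [NormedAddCommGroup F]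
    [InnerProductSpace ℝ F] [Fintype ι] {a e : ι → F}
    (hadd : ∑ i, ‖a i + e i‖ ^ 2 ≤ ∑ i, ‖a i‖ ^ 2)
    (hsub : ∑ i, ‖a i - e i‖ ^ 2 ≤ ∑ i, ‖a i‖ ^ 2) : e = 0 := by
  have parallelogram : ∑ i, ‖a i + e i‖ ^ 2 + ∑ i, ‖a i - e i‖ ^ 2 =
      2 * ∑ i, ‖a i‖ ^ 2 + 2 * ∑ i, ‖e i‖ ^ 2 := by
    simp only [Finset.mul_sum, ← Finset.sum_add_distrib]
    refine Finset.sum_congr rfl fun i _ => ?_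
    linarith [parallelogram_law_with_norm ℝ (a i) (e i)]
  have hsum : ∑ i, ‖e i‖ ^ 2 = 0 :=
    le_antisymm (by linarith) (Finset.sum_nonneg fun _ _ => sq_nonneg _)
  simpa [Finset.sum_eq_zero_iff_of_nonneg, funext_iff] using hsum

theorem eq_zero_of_isLocalMax_mul_sum_norm_sq {E F ι : Type*} [AddCommGroup E] [Module ℝ E]
    [TopologicalSpace E] [ContinuousAdd E] [ContinuousSMul ℝ E] [NormedAddCommGroup F]
    [InnerProductSpace ℝ F] [Fintype ι] {c : ℝ} (hc : 0 < c) {r : E → ι → F} {p d : E} {e : ι → F}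
    (hmax : IsLocalMax (fun x => c * ∑ i, ‖r x i‖ ^ 2) p)
    (hr : ∀ t : ℝ, r (p + t • d) = r p + t • e) : e = 0 := by
  have near_line (s : ℝ) :
      ∀ᶠ t : ℝ in 𝓝[≠] 0, ∑ i, ‖r p i + (s * t) • e i‖ ^ 2 ≤ ∑ i, ‖r p i‖ ^ 2 := by
    have hcont : Continuous fun t : ℝ => p + (s * t) • d := by fun_prop
    have tendsto_line : Tendsto (fun t : ℝ => p + (s * t) • d) (𝓝[≠] 0) (𝓝 p) := by
      simpa using (hcont.tendsto 0).mono_left nhdsWithin_le_nhds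
    filter_upwards [tendsto_line.eventually hmax] with t ht
    simpa only [hr, Pi.add_apply, Pi.smul_apply] using le_of_mul_le_mul_left ht hc
  obtain ⟨t, ⟨hadd, hsub⟩, ht⟩ :=
    (((near_line 1).and (near_line (-1))).and self_mem_nhdsWithin).exists
  simp only [one_mul, neg_one_mul, neg_smul, ← sub_eq_add_neg] at hadd hsub
  have hte : t • e = 0 := eq_zero_of_sum_norm_sq_add_le_of_sum_norm_sq_sub_le hadd hsub
  exact (smul_eq_zero.1 hte).resolve_left ht

namespace ResNEst

variable {ι k m o : Type*} [Fintype k] [Fintype m]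

/-- The residual `W_{L+1} (u^n + W_L v_L^n) - y^n` of the `n`-th sample at the parameters
`p = (W_L, W_{L+1})`, as a Euclidean vector so that its norm is the one in the squared loss. -/
def residual (u : ι → m → ℝ) (v : ι → k → ℝ) (y : ι → o → ℝ) (p : Matrix m k ℝ × Matrix o m ℝ)
    (n : ι) : EuclideanSpace ℝ o :=
  toLp 2 (p.2 *ᵥ (u n + p.1 *ᵥ v n) - y n)

/-- The fixed-feature empirical risk under the squared loss, as a function of `(W_L, W_{L+1})`.
The contribution of the earlier blocks is an arbitrary family `u`, and `v` stands for `v_L`. -/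
noncomputable def empiricalRisk [Fintype ι] [Fintype o] (u : ι → m → ℝ) (v : ι → k → ℝ)
    (y : ι → o → ℝ) (p : Matrix m k ℝ × Matrix o m ℝ) : ℝ :=
  (1 / (Fintype.card ι : ℝ)) * ∑ n, ‖residual u v y p n‖ ^ 2

variable {u : ι → m → ℝ} {v : ι → k → ℝ} {y : ι → o → ℝ} {A : Matrix m k ℝ} {B : Matrix o m ℝ}

theorem residual_add_smul_fst (D : Matrix m k ℝ) (t : ℝ) :
    residual u v y ((A, B) + t • (D, 0)) =
      residual u v y (A, B) + t • fun n => toLp 2 (B *ᵥ (D *ᵥ v n)) := by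
  funext n
  simp only [residual, Prod.smul_mk, smul_zero, Prod.mk_add_mk, add_zero, add_mulVec, smul_mulVec,
    mulVec_add, mulVec_smul, toLp_sub, toLp_add, toLp_smul, Pi.add_apply, Pi.smul_apply]
  abel

theorem residual_add_smul_snd (D : Matrix o m ℝ) (t : ℝ) :
    residual u v y ((A, B) + t • (0, D)) =
      residual u v y (A, B) + t • fun n => toLp 2 (D *ᵥ (u n + A *ᵥ v n)) := by
  funext n
  simp only [residual, Prod.smul_mk, smul_zero, Prod.mk_add_mk, add_zero, add_mulVec, smul_mulVec,
    toLp_sub, toLp_add, toLp_smul, Pi.add_apply, Pi.smul_apply]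
  abel

variable [Fintype ι] [Fintype o]

theorem empiricalRisk_eq_of_add_mulVec_eq_zero (hA : ∀ n, u n + A *ᵥ v n = 0)
    (B B' : Matrix o m ℝ) : empiricalRisk u v y (A, B) = empiricalRisk u v y (A, B') := by
  simp [empiricalRisk, residual, hA]

theorem add_mulVec_eq_zero_of_isLocalMax [Nonempty o]
    (hmax : IsLocalMax (empiricalRisk u v y) (A, B)) (n : ι) : u n + A *ᵥ v n = 0 := by
  have : Nonempty ι := ⟨n⟩
  have mulVec_eq_zero (D : Matrix o m ℝ) : D *ᵥ (u n + A *ᵥ v n) = 0 :=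
    congrArg ofLp <| congrFun
      (eq_zero_of_isLocalMax_mul_sum_norm_sq (by positivity) hmax (residual_add_smul_snd D)) n
  obtain ⟨j⟩ := ‹Nonempty o›
  exact dotProduct_self_eq_zero.1 (congrFun (mulVec_eq_zero (of fun _ => u n + A *ᵥ v n)) j)

theorem snd_eq_zero_of_isLocalMax (hv : v ≠ 0) (hmax : IsLocalMax (empiricalRisk u v y) (A, B)) :
    B = 0 := by
  obtain ⟨n, hn⟩ := Function.ne_iff.1 hv
  have : Nonempty ι := ⟨n⟩
  have mulVec_mulVec_eq_zero (D : Matrix m k ℝ) : B *ᵥ (D *ᵥ v n) = 0 :=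
    congrArg ofLp <| congrFun
      (eq_zero_of_isLocalMax_mul_sum_norm_sq (by positivity) hmax (residual_add_smul_fst D)) n
  refine ext_iff_mulVec.2 fun w => ?_
  have hw := mulVec_mulVec_eq_zero (vecMulVec w (v n))
  rw [vecMulVec_mulVec, op_smul_eq_smul, mulVec_smul] at hw
  simpa using (smul_eq_zero.1 hw).resolve_left (dotProduct_self_eq_zero.not.2 hn)

end ResNEst

open ResNEst in
theorem resnest_fixed_feature_critical_not_min_is_saddle_general {ι k m o : Type*} [Fintype ι]
    [Fintype k] [Fintype m] [Fintype o] [Nonempty m] [Nonempty o] (u : ι → m → ℝ) {v : ι → k → ℝ}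
    (hv : v ≠ 0) (y : ι → o → ℝ) (p : Matrix m k ℝ × Matrix o m ℝ) :
    ¬ IsLocalMax (empiricalRisk u v y) p := by
  obtain ⟨A, B⟩ := p
  intro hmax
  have hA := add_mulVec_eq_zero_of_isLocalMax hmax
  have tendsto_pair : Tendsto (fun B' => (A, B')) (𝓝 B) (𝓝 (A, B)) :=
    (Continuous.prodMk_right A).tendsto B
  have isLocalMax_near : ∀ᶠ B' in 𝓝 B, IsLocalMax (empiricalRisk u v y) (A, B') :=
    (tendsto_pair.eventually hmax.eventually_nhds).mono fun B' h =>
      h.mono fun _ hq => hq.trans_eq (empiricalRisk_eq_of_add_mulVec_eq_zero hA B B')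
  have eq_zero_near : ∀ᶠ B' in 𝓝 B, B' = 0 :=
    isLocalMax_near.mono fun _ => snd_eq_zero_of_isLocalMax hv
  have : (𝓝[≠] B).NeBot := Module.punctured_nhds_neBot ℝ _ B
  have ne_near : ∀ᶠ B' in 𝓝[≠] B, B' ≠ B := self_mem_nhdsWithin
  obtain ⟨B', hB', hne⟩ := ((eq_zero_near.filter_mono nhdsWithin_le_nhds).and ne_near).exists
  exact hne (hB'.trans eq_zero_near.self_of_nhds.symm)

theorem resnest_fixed_feature_critical_not_min_is_saddle
    (N L M No : ℕ) (hN : 0 < N) (hL : 1 ≤ L) (hM : 0 < M) (hNo : 0 < No)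
    (K : ℕ → ℕ)
    -- fixed matrices W_i ∈ ℝ^{M×K_i}, i = 0, …, L−1
    (W : (i : ℕ) → Matrix (Fin M) (Fin (K i)) ℝ)
    -- feature vectors v_i^n ∈ ℝ^{K_i} and targets y^n ∈ ℝ^{N_o}
    (v : (i : ℕ) → Fin N → Fin (K i) → ℝ)
    (y : Fin N → Fin No → ℝ)
    -- u^n = Σ_{i=0}^{L−1} W_i v_i^n
    (u : Fin N → Fin M → ℝ)
    (hu : ∀ n, u n = ∑ i ∈ Finset.range L, (W i).mulVec (v i n))
    -- squared loss ℓ(yhat, y) = ‖yhat − y‖²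
    (ℓ : (Fin No → ℝ) → (Fin No → ℝ) → ℝ)
    (hℓ : ∀ yhat yy, ℓ yhat yy = ∑ j, (yhat j - yy j) ^ 2)
    -- fixed-feature ResNEst empirical risk
    (R : Matrix (Fin M) (Fin (K L)) ℝ × Matrix (Fin No) (Fin M) ℝ → ℝ)
    (hR : ∀ p, R p =
      (1 / (N : ℝ)) * ∑ n, ℓ (p.2.mulVec (u n + p.1.mulVec (v L n))) (y n))
    -- Assumption 1: Σ_n v_L^n (y^n)^T ≠ 0 and Σ_n v_L^n (v_L^n)^T invertible
    (hA1 : (Matrix.of fun k j => ∑ n, v L n k * y n j :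
        Matrix (Fin (K L)) (Fin No) ℝ) ≠ 0)
    (hA1' : IsUnit (Matrix.of fun k k' => ∑ n, v L n k * v L n k' :
        Matrix (Fin (K L)) (Fin (K L)) ℝ)) :
    ∀ p : Matrix (Fin M) (Fin (K L)) ℝ × Matrix (Fin No) (Fin M) ℝ,
      fderiv ℝ R p = 0 → ¬ IsLocalMin R p → ¬ IsLocalMax R p := by
  have hv : v L ≠ 0 := fun h => hA1 (by ext; simp [h])
  have hR' : R = ResNEst.empiricalRisk u (v L) y := funext fun p => by
    simp [hR, hℓ, ResNEst.empiricalRisk, ResNEst.residual, EuclideanSpace.real_norm_sq_eq]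
  have : Nonempty (Fin M) := ⟨⟨0, hM⟩⟩
  have : Nonempty (Fin No) := ⟨⟨0, hNo⟩⟩
  exact fun p _ _ => hR' ▸ resnest_fixed_feature_critical_not_min_is_saddle_general u hv y p
end

section
/- Suppose Assumption 2 holds. Let (W_L*, W_{L+1}*) be any local minimizer of the fixed-feature ResNEst empirical risk R, and let (H_0*,…,H_L*) be any local minimizer of the A-ResNEst empirical risk A. Then R(W_L*, W_{L+1}*) ≥ A(H_0*,…,H_L*), i.e., the excess risk ε(W_L*, W_{L+1}*) = R(W_L*, W_{L+1}*) − A(H_0*,…,H_L*) is nonnegative. -/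
/-!
STATEMENT 3: Under Assumption 2, the risk of any local minimizer of the fixed-feature
ResNEst problem is at least the risk of any local minimizer of the A-ResNEst problem:
the excess risk ε = R(W_L*, W_{L+1}*) − A(H_0*, …, H_L*) is nonnegative.
-/

attribute [local instance] Matrix.normedAddCommGroup Matrix.normedSpace

/-!
The readout distributes over the residual sum: `C (∑ᵢ Wᵢ vᵢ) = ∑ᵢ (C Wᵢ) vᵢ`. Hence every ResNEst
prediction is the A-ResNEst prediction with weights `Hᵢ = C Wᵢ`. The latter is linear in `H`, so the
A-ResNEst risk is convex and its local minimizers are global; they beat `H = C W` in particular.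
-/

open scoped Matrix

theorem convexOn_sum {𝕜 E β ι : Type*} [Semiring 𝕜] [PartialOrder 𝕜] [AddCommMonoid E]
    [AddCommMonoid β] [PartialOrder β] [IsOrderedAddMonoid β] [SMul 𝕜 E]
    [DistribMulAction 𝕜 β] {s : Set E} (hs : Convex 𝕜 s) {t : Finset ι} {f : ι → E → β}
    (hf : ∀ i ∈ t, ConvexOn 𝕜 s (f i)) : ConvexOn 𝕜 s fun x => ∑ i ∈ t, f i x := by
  rw [← Finset.sum_fn]
  exact Finset.sum_induction f (ConvexOn 𝕜 s) (fun _ _ => ConvexOn.add)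
    ⟨hs, fun _ _ _ _ _ _ _ _ _ => by simp⟩ hf

section EmpiricalRisk

variable {ι E Y : Type*} [Fintype ι]

/-- The empirical risk of the predictions `yhat n` against the targets `y n`: the loss `ℓ` averaged
over the samples. If there are no samples it is `0`, since `1 / 0 = 0`. -/
noncomputable def empiricalRisk (ℓ : E → Y → ℝ) (y : ι → Y) (yhat : ι → E) : ℝ :=
  (1 / (Fintype.card ι : ℝ)) * ∑ n, ℓ (yhat n) (y n)

theorem convexOn_empiricalRisk [AddCommMonoid E] [Module ℝ E] {ℓ : E → Y → ℝ}
    (hℓ : ∀ z, ConvexOn ℝ Set.univ (ℓ · z)) (y : ι → Y) :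
    ConvexOn ℝ Set.univ (empiricalRisk ℓ y) := by
  have hsample (n : ι) : ConvexOn ℝ Set.univ fun yhat : ι → E => ℓ (yhat n) (y n) :=
    (hℓ (y n)).comp_linearMap (LinearMap.proj (R := ℝ) (φ := fun _ => E) n)
  exact (convexOn_sum convex_univ fun n _ => hsample n).smul (by positivity)

end EmpiricalRisk

section Predictions

variable {ι β m o : Type*} [Fintype β] [Fintype m] {κ : β → Type*} [∀ i, Fintype (κ i)]

/-- The ResNEst predictions `C (∑ᵢ Wᵢ vᵢⁿ)` for residual weights `W` and readout matrix `C`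
(`W_{L+1}` in the paper). All blocks are treated alike here, including the last one. -/
def resnestPrediction (v : (i : β) → ι → κ i → ℝ) (W : (i : β) → Matrix m (κ i) ℝ)
    (C : Matrix o m ℝ) (n : ι) : o → ℝ :=
  C *ᵥ ∑ i, W i *ᵥ v i n

/-- The A-ResNEst predictions `∑ᵢ Hᵢ vᵢⁿ`, as a linear map of the weights `H`. -/
def aresnestPrediction (v : (i : β) → ι → κ i → ℝ) :
    ((i : β) → Matrix o (κ i) ℝ) →ₗ[ℝ] ι → o → ℝ where
  toFun H n := ∑ i, H i *ᵥ v i n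
  map_add' G H := by
    ext n : 1
    simp [Matrix.add_mulVec, Finset.sum_add_distrib]
  map_smul' c H := by
    ext n : 1
    simp [Matrix.smul_mulVec, Finset.smul_sum]

theorem resnestPrediction_eq_aresnestPrediction (v : (i : β) → ι → κ i → ℝ)
    (W : (i : β) → Matrix m (κ i) ℝ) (C : Matrix o m ℝ) :
    resnestPrediction v W C = aresnestPrediction v fun i => C * W i := by
  ext n : 1
  simp [resnestPrediction, aresnestPrediction, Matrix.mulVec_sum]

end Predictions

theorem sum_fin_succ_update {G : Type*} [AddCommMonoid G] {α : ℕ → Type*}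
    (F : (i : ℕ) → α i → G) (f : (i : ℕ) → α i) (n : ℕ) (a : α n) :
    ∑ i : Fin (n + 1), F i (Function.update f n a i) =
      ∑ i ∈ Finset.range n, F i (f i) + F n a := by
  rw [Fin.sum_univ_eq_sum_range fun i => F i (Function.update f n a i), Finset.sum_range_succ,
    Function.update_self]
  congr 1
  refine Finset.sum_congr rfl fun i hi => ?_
  rw [Function.update_of_ne (Finset.mem_range.mp hi).ne]

theorem resnestPrediction_update {ι m o : Type*} [Fintype m] {κ : ℕ → Type*}
    [∀ i, Fintype (κ i)] (v : (i : ℕ) → ι → κ i → ℝ) (W : (i : ℕ) → Matrix m (κ i) ℝ) (L : ℕ)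
    (B : Matrix m (κ L) ℝ) (C : Matrix o m ℝ) (n : ι) :
    resnestPrediction (fun i : Fin (L + 1) => v i) (fun i => Function.update W L B i) C n =
      C *ᵥ (∑ i ∈ Finset.range L, W i *ᵥ v i n + B *ᵥ v L n) :=
  congrArg (C *ᵥ ·) (sum_fin_succ_update (fun i D => D *ᵥ v i n) W L B)

theorem resnest_local_min_risk_ge_aresnest_local_min_risk_general
    {ι β m o Y : Type*} [Fintype ι] [Fintype β] [Fintype m]
    {κ : β → Type*} [∀ i, Fintype (κ i)]
    (v : (i : β) → ι → κ i → ℝ) (y : ι → Y)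
    {ℓ : (o → ℝ) → Y → ℝ} (hℓ : ∀ z, ConvexOn ℝ Set.univ (ℓ · z))
    (W : (i : β) → Matrix m (κ i) ℝ) (C : Matrix o m ℝ)
    {H : (i : β) → Matrix o (κ i) ℝ}
    (hH : IsLocalMin (fun G => empiricalRisk ℓ y (aresnestPrediction v G)) H) :
    empiricalRisk ℓ y (aresnestPrediction v H) ≤ empiricalRisk ℓ y (resnestPrediction v W C) := by
  have hconvex : ConvexOn ℝ Set.univ fun G => empiricalRisk ℓ y (aresnestPrediction v G) :=
    (convexOn_empiricalRisk hℓ y).comp_linearMap (aresnestPrediction v)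
  rw [resnestPrediction_eq_aresnestPrediction]
  exact IsMinOn.of_isLocalMin_of_convex_univ hH hconvex fun i => C * W i

theorem resnest_local_min_risk_ge_aresnest_local_min_risk
    (N L M No : ℕ) (hN : 0 < N) (hL : 1 ≤ L) (hM : 0 < M) (hNo : 0 < No)
    (K : ℕ → ℕ)
    -- fixed matrices W_i ∈ ℝ^{M×K_i}, i = 0, …, L−1
    (W : (i : ℕ) → Matrix (Fin M) (Fin (K i)) ℝ)
    -- feature vectors v_i^n ∈ ℝ^{K_i} and targets y^n ∈ ℝ^{N_o}
    (v : (i : ℕ) → Fin N → Fin (K i) → ℝ)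
    (y : Fin N → Fin No → ℝ)
    -- u^n = Σ_{i=0}^{L−1} W_i v_i^n
    (u : Fin N → Fin M → ℝ)
    (hu : ∀ n, u n = ∑ i ∈ Finset.range L, (W i).mulVec (v i n))
    -- the loss function
    (ℓ : (Fin No → ℝ) → (Fin No → ℝ) → ℝ)
    -- Assumption 2: ℓ(yhat, y) is differentiable and convex in yhat for every y
    (hdiff : ∀ yy, Differentiable ℝ (fun yhat => ℓ yhat yy))
    (hconv : ∀ yy, ConvexOn ℝ Set.univ (fun yhat => ℓ yhat yy))
    -- fixed-feature ResNEst empirical risk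
    (R : Matrix (Fin M) (Fin (K L)) ℝ × Matrix (Fin No) (Fin M) ℝ → ℝ)
    (hR : ∀ p, R p =
      (1 / (N : ℝ)) * ∑ n, ℓ (p.2.mulVec (u n + p.1.mulVec (v L n))) (y n))
    -- A-ResNEst empirical risk
    (A : ((i : Fin (L + 1)) → Matrix (Fin No) (Fin (K i.val)) ℝ) → ℝ)
    (hA : ∀ H, A H =
      (1 / (N : ℝ)) * ∑ n, ℓ (∑ i : Fin (L + 1), (H i).mulVec (v i.val n)) (y n))
    -- local minimizers
    (p : Matrix (Fin M) (Fin (K L)) ℝ × Matrix (Fin No) (Fin M) ℝ)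
    (hp : IsLocalMin R p)
    (H : (i : Fin (L + 1)) → Matrix (Fin No) (Fin (K i.val)) ℝ)
    (hH : IsLocalMin A H) :
    R p - A H ≥ 0 := by
  have hRp : R p = empiricalRisk ℓ y (resnestPrediction (fun i : Fin (L + 1) => v i)
      (fun i => Function.update W L p.1 i) p.2) := by
    simp [hR, hu, empiricalRisk, resnestPrediction_update v W]
  obtain rfl : A = fun G =>
      empiricalRisk ℓ y (aresnestPrediction (fun i : Fin (L + 1) => v i) G) := by
    simp [funext_iff, hA, empiricalRisk, aresnestPrediction]
  rw [hRp]
  exact sub_nonneg.mpr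
    (resnest_local_min_risk_ge_aresnest_local_min_risk_general _ y hconv _ p.2 hH)
end

section
/- Suppose Assumption 2 (ℓ differentiable and convex in its first argument), Assumption 3 (M ≥ N_o), and Assumption 4 (the linear map (c_0,…,c_{L−1}) ↦ Σ_{i=0}^{L−1} W_i c_i is injective) hold. Then every critical point (W_L*, W_{L+1}*) of the fixed-feature ResNEst empirical risk R at which W_{L+1}* has full rank N_o is a global minimizer of R. -/
/-!
STATEMENT 4: Under Assumptions 2 (ℓ differentiable and convex in its first argument),
3 (M ≥ N_o) and 4 (injectivity of (c_0,…,c_{L−1}) ↦ Σ W_i c_i), every critical point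
of the fixed-feature ResNEst risk `R` at which `W_{L+1}*` has full rank `N_o`
is a global minimizer of `R`.
-/

attribute [local instance] Matrix.normedAddCommGroup Matrix.normedSpace

/-!
Write `Φ (A, B)` for the family of predictions `B (uⁿ + A vⁿ)`, so that the risk is a convex
function `F` of `Φ`. Although `Φ` is not linear, if `B` has a right inverse `S` then *every*
difference of predictions is a tangent vector of `Φ` at `(A, B)`:
`B' (u + A' v) - B (u + A v) = (B' - B) (u + A v) + B (S B' (A' - A)) v`.
At a critical point `F'` vanishes on all tangent vectors, hence on all such differences, and
convexity of `F` then gives global minimality.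
-/

section ConvexObjective

variable {E P : Type*} [NormedAddCommGroup E] [NormedSpace ℝ E]
  [NormedAddCommGroup P] [NormedSpace ℝ P] {s : Set E} {F : E → ℝ}

theorem add_fderiv_sub_le_of_convexOn {x y : E} (hF : ConvexOn ℝ s F)
    (hdiff : DifferentiableAt ℝ F x) (hx : x ∈ s) (hy : y ∈ s) :
    F x + fderiv ℝ F x (y - x) ≤ F y := by
  have hconv : ConvexOn ℝ (AffineMap.lineMap (k := ℝ) x y ⁻¹' s)
      (F ∘ AffineMap.lineMap (k := ℝ) x y) :=
    hF.comp_affineMap _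
  have hderiv : HasDerivAt (F ∘ AffineMap.lineMap (k := ℝ) x y) (fderiv ℝ F x (y - x)) 0 :=
    HasFDerivAt.comp_hasDerivAt 0 (by simpa using hdiff.hasFDerivAt) AffineMap.hasDerivAt_lineMap
  have hslope := hconv.le_slope_of_hasDerivAt (by simpa using hx) (by simpa using hy)
    one_pos hderiv
  simp only [slope_def_field, Function.comp_apply, AffineMap.lineMap_apply_zero,
    AffineMap.lineMap_apply_one, sub_zero, div_one] at hslope
  linarith

theorem le_of_fderiv_comp_eq_zero_of_convexOn {Φ : P → E} {p : P} {y : E} (hF : ConvexOn ℝ s F)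
    (hFdiff : DifferentiableAt ℝ F (Φ p)) (hΦ : DifferentiableAt ℝ Φ p)
    (hcrit : fderiv ℝ (F ∘ Φ) p = 0) (hp : Φ p ∈ s) (hy : y ∈ s)
    (htangent : y - Φ p ∈ (fderiv ℝ Φ p).range) : F (Φ p) ≤ F y := by
  obtain ⟨d, hd : fderiv ℝ Φ p d = y - Φ p⟩ := htangent
  have hzero : fderiv ℝ F (Φ p) (y - Φ p) = 0 := by
    rw [← hd, ← ContinuousLinearMap.comp_apply, ← fderiv_comp p hFdiff hΦ, hcrit,
      zero_apply]
  simpa [hzero] using add_fderiv_sub_le_of_convexOn hF hFdiff hp hy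

end ConvexObjective

theorem convexOn_const_mul_sum_apply {ι E : Type*} [Fintype ι] [AddCommGroup E] [Module ℝ E]
    {c : ℝ} {f : ι → E → ℝ} (hc : 0 ≤ c) (hf : ∀ i, ConvexOn ℝ Set.univ (f i)) :
    ConvexOn ℝ Set.univ fun z : ι → E => c * ∑ i, f i (z i) := by
  refine ConvexOn.smul hc ⟨convex_univ, fun z _ w _ a b ha hb hab => ?_⟩
  rw [Finset.smul_sum, Finset.smul_sum, ← Finset.sum_add_distrib]
  exact Finset.sum_le_sum fun i _ => (hf i).2 (Set.mem_univ _) (Set.mem_univ _) ha hb hab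

theorem exists_mul_eq_one_of_rank_eq_card {K m n : Type*} [Field K] [Fintype m] [DecidableEq m]
    [Fintype n] {A : Matrix m n K} (hA : A.rank = Fintype.card m) :
    ∃ S : Matrix n m K, A * S = 1 := by
  have hrange : LinearMap.range A.mulVecLin = ⊤ :=
    Submodule.eq_top_of_finrank_eq (by simpa [Matrix.rank] using hA)
  exact Matrix.mulVec_surjective_iff_exists_right_inverse.1 (LinearMap.range_eq_top.1 hrange)

section ResNEst

open scoped Matrix

variable {ι k m o : Type*} [Fintype k] [Fintype m]

/-- The product `A *ᵥ x` as a continuous bilinear map, so that the calculus of bilinear maps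
applies to it. -/
noncomputable def mulVecCLM [Finite o] : Matrix o m ℝ →L[ℝ] (m → ℝ) →L[ℝ] (o → ℝ) :=
  (Matrix.mulVecBilin ℝ ℝ).toContinuousBilinearMap

/-- The predictions `W_{L+1} (uⁿ + W_L v_Lⁿ)` of a ResNEst with fixed features, as a function of
the parameters `p = (W_L, W_{L+1})`. The contribution of the earlier blocks enters only through
`u`, and `v` is the last feature `v_L`. -/
def resnestOutput (u : ι → m → ℝ) (v : ι → k → ℝ) (p : Matrix m k ℝ × Matrix o m ℝ) :
    ι → o → ℝ :=
  fun n => p.2 *ᵥ (u n + p.1 *ᵥ v n)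

theorem resnestOutput_sub [Fintype o] [DecidableEq o] (u : ι → m → ℝ) (v : ι → k → ℝ)
    {p : Matrix m k ℝ × Matrix o m ℝ} {S : Matrix m o ℝ} (hS : p.2 * S = 1)
    (q : Matrix m k ℝ × Matrix o m ℝ) (n : ι) :
    resnestOutput u v q n - resnestOutput u v p n =
      p.2 *ᵥ ((S * (q.2 * (q.1 - p.1))) *ᵥ v n) + (q.2 - p.2) *ᵥ (u n + p.1 *ᵥ v n) := by
  have hcancel : p.2 * (S * (q.2 * (q.1 - p.1))) = q.2 * (q.1 - p.1) := by
    rw [← Matrix.mul_assoc, hS, Matrix.one_mul]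
  rw [Matrix.mulVec_mulVec, hcancel, ← Matrix.mulVec_mulVec]
  simp only [resnestOutput, Matrix.mulVec_add, Matrix.sub_mulVec, Matrix.mulVec_sub]
  abel

variable [Finite ι]

theorem differentiable_resnestOutput [Finite o] (u : ι → m → ℝ) (v : ι → k → ℝ) :
    Differentiable ℝ (resnestOutput (o := o) u v) := by
  cases nonempty_fintype ι
  cases nonempty_fintype o
  refine differentiable_pi.2 fun n => ?_
  change Differentiable ℝ fun p : Matrix m k ℝ × Matrix o m ℝ =>
    mulVecCLM p.2 (u n + mulVecCLM p.1 (v n))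
  fun_prop

theorem fderiv_resnestOutput_apply [Finite o] (u : ι → m → ℝ) (v : ι → k → ℝ)
    (p d : Matrix m k ℝ × Matrix o m ℝ) (n : ι) :
    fderiv ℝ (resnestOutput u v) p d n =
      p.2 *ᵥ (d.1 *ᵥ v n) + d.2 *ᵥ (u n + p.1 *ᵥ v n) := by
  cases nonempty_fintype ι
  cases nonempty_fintype o
  have hhidden (n : ι) := (mulVecCLM.hasFDerivAt_of_bilinear
    (hasFDerivAt_fst (𝕜 := ℝ) (p := p)) (hasFDerivAt_const (v n) p)).const_add (u n)
  have houtput (n : ι) := mulVecCLM.hasFDerivAt_of_bilinear hasFDerivAt_snd (hhidden n)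
  have hpi : HasFDerivAt (resnestOutput u v) _ p := hasFDerivAt_pi.2 houtput
  rw [hpi.fderiv]
  change p.2 *ᵥ (p.1 *ᵥ 0 + d.1 *ᵥ v n) + d.2 *ᵥ (u n + p.1 *ᵥ v n) = _
  rw [Matrix.mulVec_zero, zero_add]

theorem resnestOutput_sub_mem_range_fderiv [Finite o] [DecidableEq o]
    (u : ι → m → ℝ) (v : ι → k → ℝ) {p : Matrix m k ℝ × Matrix o m ℝ} {S : Matrix m o ℝ}
    (hS : p.2 * S = 1) (q : Matrix m k ℝ × Matrix o m ℝ) :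
    resnestOutput u v q - resnestOutput u v p ∈ (fderiv ℝ (resnestOutput u v) p).range := by
  cases nonempty_fintype o
  refine ⟨(S * (q.2 * (q.1 - p.1)), q.2 - p.2), funext fun n => ?_⟩
  exact (fderiv_resnestOutput_apply u v p _ n).trans (resnestOutput_sub u v hS q n).symm

theorem resnest_full_rank_critical_point_is_global_min_general [Fintype o]
    (u : ι → m → ℝ) (v : ι → k → ℝ) {F : (ι → o → ℝ) → ℝ} (hF : ConvexOn ℝ Set.univ F)
    {p : Matrix m k ℝ × Matrix o m ℝ} (hdiff : DifferentiableAt ℝ F (resnestOutput u v p))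
    (hcrit : fderiv ℝ (F ∘ resnestOutput u v) p = 0) (hrank : p.2.rank = Fintype.card o)
    (q : Matrix m k ℝ × Matrix o m ℝ) :
    F (resnestOutput u v p) ≤ F (resnestOutput u v q) := by
  classical
  cases nonempty_fintype ι
  obtain ⟨S, hS⟩ := exists_mul_eq_one_of_rank_eq_card hrank
  exact le_of_fderiv_comp_eq_zero_of_convexOn hF hdiff (differentiable_resnestOutput u v p) hcrit
    (Set.mem_univ _) (Set.mem_univ _) (resnestOutput_sub_mem_range_fderiv u v hS q)

end ResNEst

theorem resnest_full_rank_critical_point_is_global_min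
    (N L M No : ℕ) (hN : 0 < N) (hL : 1 ≤ L) (hM : 0 < M) (hNo : 0 < No)
    (K : ℕ → ℕ)
    -- fixed matrices W_i ∈ ℝ^{M×K_i}, i = 0, …, L−1
    (W : (i : ℕ) → Matrix (Fin M) (Fin (K i)) ℝ)
    -- feature vectors v_i^n ∈ ℝ^{K_i} and targets y^n ∈ ℝ^{N_o}
    (v : (i : ℕ) → Fin N → Fin (K i) → ℝ)
    (y : Fin N → Fin No → ℝ)
    -- u^n = Σ_{i=0}^{L−1} W_i v_i^n
    (u : Fin N → Fin M → ℝ)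
    (hu : ∀ n, u n = ∑ i ∈ Finset.range L, (W i).mulVec (v i n))
    -- the loss function
    (ℓ : (Fin No → ℝ) → (Fin No → ℝ) → ℝ)
    -- Assumption 2: ℓ(yhat, y) is differentiable and convex in yhat for every y
    (hdiff : ∀ yy, Differentiable ℝ (fun yhat => ℓ yhat yy))
    (hconv : ∀ yy, ConvexOn ℝ Set.univ (fun yhat => ℓ yhat yy))
    -- Assumption 3: M ≥ N_o
    (hMNo : M ≥ No)
    -- Assumption 4: (c_0, …, c_{L−1}) ↦ Σ_{i=0}^{L−1} W_i c_i is injective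
    (hinj : Function.Injective
      (fun c : (i : Fin L) → Fin (K i.val) → ℝ => ∑ i : Fin L, (W i.val).mulVec (c i)))
    -- fixed-feature ResNEst empirical risk
    (R : Matrix (Fin M) (Fin (K L)) ℝ × Matrix (Fin No) (Fin M) ℝ → ℝ)
    (hR : ∀ p, R p =
      (1 / (N : ℝ)) * ∑ n, ℓ (p.2.mulVec (u n + p.1.mulVec (v L n))) (y n))
    -- a critical point with full-rank W_{L+1}
    (p : Matrix (Fin M) (Fin (K L)) ℝ × Matrix (Fin No) (Fin M) ℝ)
    (hcrit : fderiv ℝ R p = 0)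
    (hrank : p.2.rank = No) :
    ∀ q, R p ≤ R q := by
  obtain rfl := funext hR
  exact resnest_full_rank_critical_point_is_global_min_general u (v L)
    (convexOn_const_mul_sum_apply (by positivity) fun n => hconv (y n)) (by fun_prop) hcrit
    (by simpa using hrank)
end

section
/- Suppose Assumption 2 holds (ℓ differentiable and convex in its first argument) and M ≥ N_o. Let L_α > L_β ≥ 1 be integers with L_α ≤ L, and suppose the linear map (c_0,…,c_{L_α−1}) ↦ Σ_{j=0}^{L_α−1} W_j c_j is injective and the linear map (c_0,…,c_{L_β−1}) ↦ Σ_{j=0}^{L_β−1} W_j c_j is injective. Then for any local minimizer (Wᵃ, W'ᵃ) of the depth-L_α truncated ResNEst risk R_{L_α} and any local minimizer (Wᵇ, W'ᵇ) of the depth-L_β truncated ResNEst risk R_{L_β}, one has R_{L_α}(Wᵃ, W'ᵃ) ≤ R_{L_β}(Wᵇ, W'ᵇ). -/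
/-!
STATEMENT 6 (Corollary 1): Under Assumption 2 and M ≥ N_o, for depths
L_α > L_β ≥ 1 whose corresponding combined linear maps are injective (Assumption 4
for both truncations), any local minimum of the depth-L_α truncated ResNEst risk
is ≤ any local minimum of the depth-L_β truncated ResNEst risk.
-/

attribute [local instance] Matrix.normedAddCommGroup Matrix.normedSpace

/-!
At a local minimum `(A, B)` of `∑ n, φ n (B (u n + A (v n)))`, let `g n` be the derivative of `φ n`
at the `n`-th prediction. By convexity it is enough that `∑ n, g n` vanishes on every linear
predictor `n ↦ B' (u n) + C (v n)`. Stationarity in `B` kills `n ↦ E (u n + A (v n))`, so only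
`n ↦ C (v n)` is at issue. If `B` is surjective, `C = B ∘ H`, and stationarity in `A` suffices.
If `B w = 0` with `w ≠ 0`, adding to `A` a small rank one map with range `ℝ w` changes no prediction
and yields another local minimum; comparing stationarity in `B` at the two minima kills the rank one
maps `C`, hence all of them.

Injectivity of the combined map of the deeper network makes every feature `v_j` with `j < L_α` a
linear function of the residual representation `∑ j < L_α, W_j v_j`, so that every depth-`L_β`
predictor is a linear predictor from that representation.
-/

theorem add_apply_sub_le_of_convexOn_univ {E : Type*} [NormedAddCommGroup E] [NormedSpace ℝ E]
    {f : E → ℝ} {f' : E →L[ℝ] ℝ} {x : E} (hf : ConvexOn ℝ Set.univ f) (hf' : HasFDerivAt f f' x)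
    (y : E) : f x + f' (y - x) ≤ f y := by
  have hconv : ConvexOn ℝ Set.univ (f ∘ AffineMap.lineMap (k := ℝ) x y) :=
    hf.comp_affineMap (AffineMap.lineMap x y)
  have hderiv : HasDerivAt (f ∘ AffineMap.lineMap (k := ℝ) x y) (f' (y - x)) 0 := by
    refine HasFDerivAt.comp_hasDerivAt 0 ?_ AffineMap.hasDerivAt_lineMap
    rwa [AffineMap.lineMap_apply_zero]
  have hslope := hconv.le_slope_of_hasDerivAt (Set.mem_univ 0) (Set.mem_univ 1) one_pos hderiv
  simp only [slope_def_field, Function.comp_apply, AffineMap.lineMap_apply_one,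
    AffineMap.lineMap_apply_zero, sub_zero, div_one] at hslope
  linarith

open scoped Topology in
theorem exists_ne_zero_isLocalMin_add_smul {E : Type*} [AddCommGroup E] [Module ℝ E]
    [TopologicalSpace E] [ContinuousAdd E] [ContinuousSMul ℝ E] {f : E → ℝ} {p d : E}
    (hp : IsLocalMin f p) (hd : ∀ s : ℝ, f (p + s • d) = f p) :
    ∃ s : ℝ, s ≠ 0 ∧ IsLocalMin f (p + s • d) := by
  have hline : Filter.Tendsto (fun s : ℝ ↦ p + s • d) (𝓝 0) (𝓝 p) :=
    Continuous.tendsto' (by fun_prop) 0 p (by simp)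
  have hnear : ∀ᶠ s : ℝ in 𝓝[≠] 0, ∀ᶠ q in 𝓝 (p + s • d), f p ≤ f q :=
    (hline.eventually (eventually_eventually_nhds.2 hp)).filter_mono nhdsWithin_le_nhds
  obtain ⟨s, hs, hs0⟩ := (hnear.and self_mem_nhdsWithin).exists
  exact ⟨s, hs0, hs.mono fun q hq ↦ (hd s).trans_le hq⟩

theorem sum_apply_apply_eq_zero_of_forall_mul {ι V Y : Type*} [Fintype ι]
    [NormedAddCommGroup V] [NormedSpace ℝ V] [NormedAddCommGroup Y] [NormedSpace ℝ Y]
    [FiniteDimensional ℝ Y] {g : ι → Y →L[ℝ] ℝ} {v : ι → V}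
    (h : ∀ (f : V →L[ℝ] ℝ) (y : Y), ∑ n, f (v n) * g n y = 0) (C : V →L[ℝ] Y) :
    ∑ n, g n (C (v n)) = 0 := by
  let b := Module.finBasis ℝ Y
  calc ∑ n, g n (C (v n))
      = ∑ n, ∑ i, b.repr (C (v n)) i * g n (b i) := by
        refine Finset.sum_congr rfl fun n _ ↦ ?_
        conv_lhs => rw [← b.sum_repr (C (v n))]
        simp only [map_sum, map_smul, smul_eq_mul]
    _ = ∑ i, ∑ n, b.repr (C (v n)) i * g n (b i) := Finset.sum_comm
    _ = 0 := Finset.sum_eq_zero fun i _ ↦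
        h ((b.coord i).toContinuousLinearMap.comp C) (b i)

theorem exists_linearMap_apply_sum_range_eq {𝕜 X : Type*} {V : ℕ → Type*} [Field 𝕜]
    [AddCommGroup X] [Module 𝕜 X] [∀ j, AddCommGroup (V j)] [∀ j, Module 𝕜 (V j)]
    (f : ∀ j, V j →ₗ[𝕜] X) (L : ℕ)
    (hf : Function.Injective fun c : ∀ j : Fin L, V j ↦ ∑ j : Fin L, f j (c j)) :
    ∃ P : ∀ j, X →ₗ[𝕜] V j,
      ∀ c : ∀ j, V j, ∀ j < L, P j (∑ i ∈ Finset.range L, f i (c i)) = c j := by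
  let F : (∀ j : Fin L, V j) →ₗ[𝕜] X := LinearMap.lsum 𝕜 (fun j : Fin L ↦ V j) 𝕜 fun j ↦ f j
  have hF (c : ∀ j : Fin L, V j) : F c = ∑ j : Fin L, f j (c j) := by simp [F, LinearMap.lsum_apply]
  obtain ⟨Q, hQ⟩ := F.exists_leftInverse_of_injective <| LinearMap.ker_eq_bot.2 <| by
    simpa only [Function.Injective, hF] using hf
  have hQF (c : ∀ j : Fin L, V j) : Q (F c) = c := LinearMap.congr_fun hQ c
  refine ⟨fun j ↦ if hj : j < L then LinearMap.proj (⟨j, hj⟩ : Fin L) ∘ₗ Q else 0, fun c j hj ↦ ?_⟩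
  have hsum : ∑ i ∈ Finset.range L, f i (c i) = F fun i ↦ c i := by
    rw [hF, Finset.sum_range]
  simp only [dif_pos hj, hsum, LinearMap.comp_apply, hQF, LinearMap.proj_apply]

section ResidualRisk

variable {ι V X Y : Type*} [Fintype ι] [NormedAddCommGroup V] [NormedSpace ℝ V]
  [NormedAddCommGroup X] [NormedSpace ℝ X] [NormedAddCommGroup Y] [NormedSpace ℝ Y]

/-- The output `B (x + A z)` of a last residual block with parameters `p = (A, B)`, where `x` is the
residual representation entering the block and `z` is the last feature. -/
def residualPredictor (p : (V →L[ℝ] X) × (X →L[ℝ] Y)) (x : X) (z : V) : Y :=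
  p.2 (x + p.1 z)

/-- The total loss of a last residual block on the samples `(u n, v n)`. Targets and the averaging
factor are absorbed into the loss `φ n` of the `n`-th sample. -/
def residualRisk (φ : ι → Y → ℝ) (u : ι → X) (v : ι → V) (p : (V →L[ℝ] X) × (X →L[ℝ] Y)) : ℝ :=
  ∑ n, φ n (residualPredictor p (u n) (v n))

variable {φ : ι → Y → ℝ} {u : ι → X} {v : ι → V} {p : (V →L[ℝ] X) × (X →L[ℝ] Y)}

theorem sum_fderiv_eq_zero_of_isLocalMin_residualRisk
    (hφ : ∀ n, DifferentiableAt ℝ (φ n) (residualPredictor p (u n) (v n)))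
    (hp : IsLocalMin (residualRisk φ u v) p) (H : V →L[ℝ] X) (E : X →L[ℝ] Y) :
    ∑ n, fderiv ℝ (φ n) (residualPredictor p (u n) (v n))
      (p.2 (H (v n)) + E (u n + p.1 (v n))) = 0 := by
  have hpred (n : ι) := (hasFDerivAt_snd (𝕜 := ℝ) (p := p)).clm_apply
    ((hasFDerivAt_fst.clm_apply (hasFDerivAt_const (v n) p)).const_add (u n))
  have hrisk := HasFDerivAt.fun_sum (u := Finset.univ) fun n _ ↦
    (hφ n).hasFDerivAt.comp p (hpred n)
  simpa using DFunLike.congr_fun (hp.hasFDerivAt_eq_zero hrisk) (H, E)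

theorem sum_mul_fderiv_eq_zero_of_isLocalMin_residualRisk
    (hφ : ∀ n, DifferentiableAt ℝ (φ n) (residualPredictor p (u n) (v n)))
    (hp : IsLocalMin (residualRisk φ u v) p) {w : X} (hw : w ≠ 0) (hpw : p.2 w = 0)
    (f : V →L[ℝ] ℝ) (y : Y) :
    ∑ n, f (v n) * fderiv ℝ (φ n) (residualPredictor p (u n) (v n)) y = 0 := by
  let d : (V →L[ℝ] X) × (X →L[ℝ] Y) := (f.smulRight w, 0)
  have hpred (s : ℝ) (n : ι) :
      residualPredictor (p + s • d) (u n) (v n) = residualPredictor p (u n) (v n) := by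
    simp [residualPredictor, d, hpw]
  obtain ⟨s, hs, hmin⟩ := exists_ne_zero_isLocalMin_add_smul (d := d) hp fun s ↦ by
    simp only [residualRisk, hpred]
  obtain ⟨h, hhw⟩ := SeparatingDual.exists_eq_one (R := ℝ) hw
  let E : X →L[ℝ] Y := h.smulRight y
  have hE (n : ι) : E (u n + (p + s • d).1 (v n)) = E (u n + p.1 (v n)) + s • f (v n) • y := by
    simp [E, d, hhw, add_smul, mul_smul, add_assoc]
  have hstat := sum_fderiv_eq_zero_of_isLocalMin_residualRisk hφ hp 0 E
  have hstat' := sum_fderiv_eq_zero_of_isLocalMin_residualRisk (by simpa only [hpred]) hmin 0 E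
  simp only [hpred, hE, zero_apply, map_zero, zero_add, map_add, map_smul,
    Finset.sum_add_distrib, smul_eq_mul] at hstat hstat'
  rw [hstat, zero_add, ← Finset.mul_sum] at hstat'
  exact (mul_eq_zero.1 hstat').resolve_left hs

variable [FiniteDimensional ℝ Y]

theorem sum_fderiv_apply_eq_zero_of_isLocalMin_residualRisk
    (hφ : ∀ n, DifferentiableAt ℝ (φ n) (residualPredictor p (u n) (v n)))
    (hp : IsLocalMin (residualRisk φ u v) p)
    (hB : Function.Injective p.2 → Function.Surjective p.2) (C : V →L[ℝ] Y) :
    ∑ n, fderiv ℝ (φ n) (residualPredictor p (u n) (v n)) (C (v n)) = 0 := by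
  by_cases hinj : Function.Injective p.2
  · obtain ⟨S, hS⟩ :=
      p.2.exists_rightInverse_of_surjective (LinearMap.range_eq_top.2 (hB hinj))
    have hBS (z : Y) : p.2 (S z) = z := DFunLike.congr_fun hS z
    simpa [hBS] using sum_fderiv_eq_zero_of_isLocalMin_residualRisk hφ hp (S.comp C) 0
  · obtain ⟨w, hpw, hw⟩ : ∃ w, p.2 w = 0 ∧ w ≠ 0 := by
      simpa [injective_iff_map_eq_zero] using hinj
    exact sum_apply_apply_eq_zero_of_forall_mul
      (sum_mul_fderiv_eq_zero_of_isLocalMin_residualRisk hφ hp hw hpw) C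

theorem residualRisk_le_sum_of_isLocalMin
    (hφ : ∀ n, DifferentiableAt ℝ (φ n) (residualPredictor p (u n) (v n)))
    (hφc : ∀ n, ConvexOn ℝ Set.univ (φ n)) (hp : IsLocalMin (residualRisk φ u v) p)
    (hB : Function.Injective p.2 → Function.Surjective p.2) (B' : X →L[ℝ] Y) (C : V →L[ℝ] Y) :
    residualRisk φ u v p ≤ ∑ n, φ n (B' (u n) + C (v n)) := by
  let z (n : ι) : Y := residualPredictor p (u n) (v n)
  have hdir (n : ι) : B' (u n) + C (v n) - z n =
      (B' - p.2) (u n + p.1 (v n)) + (C - B'.comp p.1) (v n) := by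
    simp only [z, residualPredictor, sub_apply, ContinuousLinearMap.comp_apply, map_add]
    abel
  have hstat : ∑ n, fderiv ℝ (φ n) (z n) (B' (u n) + C (v n) - z n) = 0 := by
    simp only [hdir, map_add (fderiv ℝ _ _), Finset.sum_add_distrib]
    rw [sum_fderiv_apply_eq_zero_of_isLocalMin_residualRisk hφ hp hB, add_zero]
    simpa using sum_fderiv_eq_zero_of_isLocalMin_residualRisk hφ hp 0 (B' - p.2)
  calc residualRisk φ u v p
      = ∑ n, (φ n (z n) + fderiv ℝ (φ n) (z n) (B' (u n) + C (v n) - z n)) := by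
        rw [Finset.sum_add_distrib, hstat, add_zero, residualRisk]
    _ ≤ ∑ n, φ n (B' (u n) + C (v n)) := Finset.sum_le_sum fun n _ ↦
        add_apply_sub_le_of_convexOn_univ (hφc n) (hφ n).hasFDerivAt _

end ResidualRisk

section TruncatedRisk

open Matrix

variable {ι m o : Type*} {κ : ℕ → Type*} [Fintype ι] [Fintype m] [∀ j, Fintype (κ j)]

/-- The depth-`L` truncated ResNEst risk, for arbitrary features `v j n` (sample `n`, layer `j`) in
place of recursively defined ones. As in `residualRisk`, targets and the averaging factor are
absorbed into the loss `φ n` of the `n`-th sample. -/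
def truncatedRisk (φ : ι → (o → ℝ) → ℝ) (W : ∀ j, Matrix m (κ j) ℝ) (v : ∀ j, ι → κ j → ℝ)
    (L : ℕ) (p : Matrix m (κ L) ℝ × Matrix o m ℝ) : ℝ :=
  ∑ n, φ n (p.2 *ᵥ (∑ j ∈ Finset.range L, W j *ᵥ v j n + p.1 *ᵥ v L n))

variable {φ : ι → (o → ℝ) → ℝ} {W : ∀ j, Matrix m (κ j) ℝ} {v : ∀ j, ι → κ j → ℝ}

theorem exists_linearMap_apply_sum_eq_shallower {Lα Lβ : ℕ} (hβα : Lβ < Lα)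
    (hinj : Function.Injective fun c : ∀ j : Fin Lα, κ j → ℝ ↦ ∑ j : Fin Lα, W j *ᵥ c j)
    (p : Matrix m (κ Lβ) ℝ × Matrix o m ℝ) :
    ∃ B : (m → ℝ) →ₗ[ℝ] (o → ℝ), ∀ c : ∀ j, κ j → ℝ,
      B (∑ j ∈ Finset.range Lα, W j *ᵥ c j) =
        p.2 *ᵥ (∑ j ∈ Finset.range Lβ, W j *ᵥ c j + p.1 *ᵥ c Lβ) := by
  obtain ⟨P, hP⟩ := exists_linearMap_apply_sum_range_eq (fun j ↦ (W j).mulVecLin) Lα hinj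
  simp only [mulVecLin_apply] at hP
  refine ⟨p.2.mulVecLin ∘ₗ
    (∑ j ∈ Finset.range Lβ, (W j).mulVecLin ∘ₗ P j + p.1.mulVecLin ∘ₗ P Lβ), fun c ↦ ?_⟩
  simp only [LinearMap.comp_apply, LinearMap.add_apply, LinearMap.sum_apply, mulVecLin_apply,
    hP c Lβ hβα]
  congr 2
  exact Finset.sum_congr rfl fun j hj ↦ by rw [hP c j ((Finset.mem_range.1 hj).trans hβα)]

variable [Fintype o]

theorem isLocalMin_residualRisk_of_truncatedRisk {L : ℕ} {p : Matrix m (κ L) ℝ × Matrix o m ℝ}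
    (hp : IsLocalMin (truncatedRisk φ W v L) p) :
    IsLocalMin (residualRisk φ (fun n ↦ ∑ j ∈ Finset.range L, W j *ᵥ v j n) (v L))
      (p.1.mulVecLin.toContinuousLinearMap, p.2.mulVecLin.toContinuousLinearMap) := by
  classical
  let toMatrices : ((κ L → ℝ) →L[ℝ] (m → ℝ)) × ((m → ℝ) →L[ℝ] (o → ℝ)) →ₗ[ℝ]
      Matrix m (κ L) ℝ × Matrix o m ℝ :=
    (LinearMap.toMatrix'.toLinearMap ∘ₗ ContinuousLinearMap.coeLM ℝ).prodMap
      (LinearMap.toMatrix'.toLinearMap ∘ₗ ContinuousLinearMap.coeLM ℝ)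
  have hrisk : truncatedRisk φ W v L ∘ toMatrices =
      residualRisk φ (fun n ↦ ∑ j ∈ Finset.range L, W j *ᵥ v j n) (v L) := by
    ext q
    simp [truncatedRisk, residualRisk, residualPredictor, toMatrices, LinearMap.toMatrix'_mulVec]
  rw [← hrisk]
  refine IsLocalMin.comp_continuous ?_ toMatrices.continuous_of_finiteDimensional.continuousAt
  simpa [toMatrices, ← Matrix.toLin'_apply'] using hp

theorem surjective_mulVec_of_injective_of_card_le {𝕜 : Type*} [Field 𝕜] (B : Matrix o m 𝕜)
    (hcard : Fintype.card o ≤ Fintype.card m) (hB : Function.Injective B.mulVec) :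
    Function.Surjective B.mulVec := by
  have hle : Fintype.card m ≤ Fintype.card o := by
    simpa using LinearMap.finrank_le_finrank_of_injective (f := B.mulVecLin) hB
  exact (LinearMap.injective_iff_surjective_of_finrank_eq_finrank (f := B.mulVecLin)
    (by simpa using hle.antisymm hcard)).1 hB

theorem resnest_deeper_local_min_le_shallower_local_min_general
    (hφ : ∀ n, Differentiable ℝ (φ n)) (hφc : ∀ n, ConvexOn ℝ Set.univ (φ n))
    (hcard : Fintype.card o ≤ Fintype.card m) {Lα Lβ : ℕ} (hβα : Lβ < Lα)
    (hinj : Function.Injective fun c : ∀ j : Fin Lα, κ j → ℝ ↦ ∑ j : Fin Lα, W j *ᵥ c j)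
    {pa : Matrix m (κ Lα) ℝ × Matrix o m ℝ} (hpa : IsLocalMin (truncatedRisk φ W v Lα) pa)
    (pb : Matrix m (κ Lβ) ℝ × Matrix o m ℝ) :
    truncatedRisk φ W v Lα pa ≤ truncatedRisk φ W v Lβ pb := by
  obtain ⟨B, hB⟩ := exists_linearMap_apply_sum_eq_shallower hβα hinj pb
  have hle := residualRisk_le_sum_of_isLocalMin (fun n ↦ hφ n _) hφc
    (isLocalMin_residualRisk_of_truncatedRisk hpa)
    (surjective_mulVec_of_injective_of_card_le pa.2 hcard) B.toContinuousLinearMap 0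
  calc truncatedRisk φ W v Lα pa
      ≤ ∑ n, φ n (B (∑ j ∈ Finset.range Lα, W j *ᵥ v j n)) := by
        simpa [truncatedRisk, residualRisk, residualPredictor] using hle
    _ = truncatedRisk φ W v Lβ pb :=
        Finset.sum_congr rfl fun n _ ↦ congrArg (φ n) (hB fun j ↦ v j n)

end TruncatedRisk

theorem resnest_deeper_local_min_le_shallower_local_min
    (N L M No : ℕ) (hN : 0 < N) (hM : 0 < M) (hNo : 0 < No)
    -- feature dimensions, K_0 = N_in is the input dimension
    (K : ℕ → ℕ)
    -- inputs x^n ∈ ℝ^{N_in} and targets y^n ∈ ℝ^{N_o}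
    (x : Fin N → Fin (K 0) → ℝ)
    (y : Fin N → Fin No → ℝ)
    -- fixed matrices W_j ∈ ℝ^{M×K_j}, j = 0, …, L−1
    (W : (j : ℕ) → Matrix (Fin M) (Fin (K j)) ℝ)
    -- residual functions G_i : ℝ^M → ℝ^{K_i}
    (G : (i : ℕ) → (Fin M → ℝ) → Fin (K i) → ℝ)
    -- features: v_0^n = x^n, v_i^n = G_i(Σ_{j<i} W_j v_j^n)
    (v : (i : ℕ) → Fin N → Fin (K i) → ℝ)
    (hv0 : ∀ n, v 0 n = x n)
    (hv : ∀ i n, 1 ≤ i → i ≤ L →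
      v i n = G i (∑ j ∈ Finset.range i, (W j).mulVec (v j n)))
    -- the loss function
    (ℓ : (Fin No → ℝ) → (Fin No → ℝ) → ℝ)
    -- Assumption 2: ℓ(yhat, y) is differentiable and convex in yhat for every y
    (hdiff : ∀ yy, Differentiable ℝ (fun yhat => ℓ yhat yy))
    (hconv : ∀ yy, ConvexOn ℝ Set.univ (fun yhat => ℓ yhat yy))
    -- Assumption 3: M ≥ N_o
    (hMNo : M ≥ No)
    -- depth-L' truncated ResNEst risks
    (Rt : (L' : ℕ) → Matrix (Fin M) (Fin (K L')) ℝ × Matrix (Fin No) (Fin M) ℝ → ℝ)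
    (hRt : ∀ L', 1 ≤ L' → L' ≤ L → ∀ p, Rt L' p =
      (1 / (N : ℝ)) * ∑ n, ℓ
        (p.2.mulVec ((∑ j ∈ Finset.range L', (W j).mulVec (v j n))
          + p.1.mulVec (v L' n))) (y n))
    -- depths L_β < L_α
    (Lα Lβ : ℕ) (hβ : 1 ≤ Lβ) (hβα : Lβ < Lα) (hα : Lα ≤ L)
    -- Assumption 4 for both truncations
    (hinjα : Function.Injective
      (fun c : (j : Fin Lα) → Fin (K j.val) → ℝ => ∑ j : Fin Lα, (W j.val).mulVec (c j)))
    (hinjβ : Function.Injective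
      (fun c : (j : Fin Lβ) → Fin (K j.val) → ℝ => ∑ j : Fin Lβ, (W j.val).mulVec (c j)))
    -- local minimizers of the two truncated risks
    (pa : Matrix (Fin M) (Fin (K Lα)) ℝ × Matrix (Fin No) (Fin M) ℝ)
    (hpa : IsLocalMin (Rt Lα) pa)
    (pb : Matrix (Fin M) (Fin (K Lβ)) ℝ × Matrix (Fin No) (Fin M) ℝ)
    (hpb : IsLocalMin (Rt Lβ) pb) :
    Rt Lα pa ≤ Rt Lβ pb := by
  have hR (L' : ℕ) (h1 : 1 ≤ L') (hL : L' ≤ L) :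
      Rt L' = truncatedRisk (fun n z ↦ 1 / (N : ℝ) * ℓ z (y n)) W v L' :=
    funext fun p ↦ (hRt L' h1 hL p).trans (Finset.mul_sum ..)
  rw [hR Lα (hβ.trans hβα.le) hα] at hpa ⊢
  rw [hR Lβ hβ (hβα.le.trans hα)]
  exact resnest_deeper_local_min_le_shallower_local_min_general
    (fun n ↦ (hdiff (y n)).const_mul _) (fun n ↦ (hconv (y n)).smul (by positivity))
    (by simpa using hMNo) hβα hinjα hpa pb
end

section
/- Suppose the loss is the squared loss ℓ(ŷ, y) = ‖ŷ − y‖², Assumption 1 holds, M ≥ N_o (Assumption 3), and Assumption 4 holds (the linear map (c_0,…,c_{L−1}) ↦ Σ_{i=0}^{L−1} W_i c_i is injective). Then at every saddle point (W_L*, W_{L+1}*) of the fixed-feature ResNEst empirical risk R (i.e., every critical point of R that is neither a local minimizer nor a local maximizer), the matrix W_{L+1}* is rank-deficient: rank(W_{L+1}*) < N_o. -/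
/-!
STATEMENT 9 (Theorem 2(a)): Under the squared loss, Assumption 1, Assumption 3
(M ≥ N_o) and Assumption 4 (injectivity), at every saddle point (critical point that
is neither a local minimizer nor a local maximizer) of the fixed-feature ResNEst risk
`R`, the matrix `W_{L+1}*` is rank-deficient: rank(W_{L+1}*) < N_o.
-/

attribute [local instance] Matrix.normedAddCommGroup Matrix.normedSpace

/-!
Let `o (W, A) n = A (u n + W (v n))` be the vector of predictions; the risk is a convex function
`φ` of it. The derivative of `o` at `(W, A)` sends `(H, G)` to `n ↦ G (u n + W (v n)) + A H (v n)`.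
If `A` is surjective, every matrix is of the form `A H`, so although `o` is not affine, all the
increments `o q - o (W, A)` belong to the range of this derivative. At a critical point of `φ ∘ o`
the derivative of `φ` vanishes on that range, so convexity of `φ` makes `(W, A)` a global minimizer.
-/

open Set

theorem convexOn_finset_sum {ι 𝕜 E β : Type*} [Semiring 𝕜] [PartialOrder 𝕜] [AddCommMonoid E]
    [SMul 𝕜 E] [AddCommMonoid β] [PartialOrder β] [IsOrderedAddMonoid β] [Module 𝕜 β] {s : Set E}
    (t : Finset ι) {f : ι → E → β} (hs : Convex 𝕜 s) (hf : ∀ i ∈ t, ConvexOn 𝕜 s (f i)) :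
    ConvexOn 𝕜 s fun x => ∑ i ∈ t, f i x := by
  simpa only [Finset.sum_fn] using
    Finset.sum_induction f (ConvexOn 𝕜 s) (fun _ _ => ConvexOn.add) (convexOn_const 0 hs) hf

section Convex

variable {E F : Type*} [NormedAddCommGroup E] [NormedSpace ℝ E]
  [NormedAddCommGroup F] [NormedSpace ℝ F]

theorem hasFDerivAt_apply_sub_le_of_convexOn {s : Set F} {φ : F → ℝ} {φ' : F →L[ℝ] ℝ} {x y : F}
    (hφ : ConvexOn ℝ s φ) (hx : x ∈ s) (hy : y ∈ s) (hφ' : HasFDerivAt φ φ' x) :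
    φ' (y - x) ≤ φ y - φ x := by
  have hconv : ConvexOn ℝ (AffineMap.lineMap x y ⁻¹' s) (φ ∘ AffineMap.lineMap (k := ℝ) x y) :=
    hφ.comp_affineMap _
  have hderiv : HasDerivAt (φ ∘ AffineMap.lineMap (k := ℝ) x y) (φ' (y - x)) 0 :=
    HasFDerivAt.comp_hasDerivAt 0 (by simpa using hφ') AffineMap.hasDerivAt_lineMap
  simpa [slope_def_field] using
    hconv.le_slope_of_hasDerivAt (by simpa using hx) (by simpa using hy) zero_lt_one hderiv

theorem isMinOn_comp_of_sub_mem_range_fderiv {s : Set E} {t : Set F} {φ : F → ℝ} {f : E → F} {p : E}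
    (hφ : ConvexOn ℝ t φ) (hst : MapsTo f s t) (hp : p ∈ s)
    (hφd : DifferentiableAt ℝ φ (f p)) (hfd : DifferentiableAt ℝ f p)
    (hcrit : fderiv ℝ (φ ∘ f) p = 0) (hrange : ∀ q ∈ s, f q - f p ∈ (fderiv ℝ f p).range) :
    IsMinOn (φ ∘ f) s p := by
  intro q hq
  obtain ⟨d, hd⟩ := hrange q hq
  have hzero : fderiv ℝ φ (f p) (f q - f p) = 0 := by
    rw [fderiv_comp p hφd hfd] at hcrit
    exact hd ▸ DFunLike.congr_fun hcrit d
  have hle := hasFDerivAt_apply_sub_le_of_convexOn hφ (hst hp) (hst hq) hφd.hasFDerivAt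
  exact sub_nonneg.mp (hzero.symm.trans_le hle)

end Convex

theorem fderiv_apply_eq_of_forall_add_smul {𝕜 E F : Type*} [NontriviallyNormedField 𝕜]
    [NormedAddCommGroup E] [NormedSpace 𝕜 E] [NormedAddCommGroup F] [NormedSpace 𝕜 F]
    {f : E → F} {x d : E} {w : F} (hf : DifferentiableAt 𝕜 f x)
    (hline : ∀ t : 𝕜, f (x + t • d) = f x + t • w) : fderiv 𝕜 f x d = w := by
  have hd : HasLineDerivAt 𝕜 f w x d := by
    simpa only [HasLineDerivAt, hline, id, one_smul] using
      ((hasDerivAt_id (0 : 𝕜)).smul_const w).const_add (f x)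
  rw [← hf.lineDeriv_eq_fderiv, hd.lineDeriv]

theorem mulVec_surjective_of_card_le_rank {K m n : Type*} [Field K] [Fintype m] [Fintype n]
    {A : Matrix m n K} (hA : Fintype.card m ≤ A.rank) : Function.Surjective A.mulVec := by
  have hrange : LinearMap.range A.mulVecLin = ⊤ :=
    Submodule.eq_top_of_finrank_eq <|
      (Submodule.finrank_le _).antisymm (by simpa [Matrix.rank] using hA)
  exact LinearMap.range_eq_top.mp hrange

section Prediction

open Matrix

variable {ι κ μ ο : Type*} [Fintype κ] [Fintype μ]

/-- The predictions of a ResNEst with fixed features on all samples, as a function of the last two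
weight matrices `p = (W_L, W_{L+1})`; `u n` is the residual input `Σ_{i<L} W_i v_i^n` and `v n` the
last feature vector `v_L^n` of the sample `n`. -/
def prediction (u : ι → μ → ℝ) (v : ι → κ → ℝ) (p : Matrix μ κ ℝ × Matrix ο μ ℝ) : ι → ο → ℝ :=
  fun n => p.2 *ᵥ (u n + p.1 *ᵥ v n)

variable (u : ι → μ → ℝ) (v : ι → κ → ℝ) (W : Matrix μ κ ℝ) (A : Matrix ο μ ℝ)

theorem prediction_sub_prediction (q : Matrix μ κ ℝ × Matrix ο μ ℝ) :
    prediction u v q - prediction u v (W, A) =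
      (fun n => (q.2 * (q.1 - W)) *ᵥ v n) + fun n => (q.2 - A) *ᵥ (u n + W *ᵥ v n) := by
  funext n
  simp only [prediction, Pi.sub_apply, Pi.add_apply, ← mulVec_mulVec, sub_mulVec, mulVec_add,
    mulVec_sub]
  abel

variable [Finite ι] [Finite ο]

theorem differentiable_prediction : Differentiable ℝ (prediction (ο := ο) u v) := by
  cases nonempty_fintype ι
  cases nonempty_fintype ο
  refine differentiable_pi.mpr fun n => differentiable_pi.mpr fun j => ?_
  simp only [prediction, mulVec, dotProduct, Pi.add_apply]
  fun_prop

theorem fderiv_prediction_apply_fst (H : Matrix μ κ ℝ) :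
    fderiv ℝ (prediction u v) (W, A) (H, 0) = fun n => (A * H) *ᵥ v n := by
  cases nonempty_fintype ι
  cases nonempty_fintype ο
  refine fderiv_apply_eq_of_forall_add_smul (differentiable_prediction u v _) fun t => ?_
  funext n
  simp [prediction, add_mulVec, smul_mulVec, mulVec_add, mulVec_smul, add_assoc]

theorem fderiv_prediction_apply_snd (G : Matrix ο μ ℝ) :
    fderiv ℝ (prediction u v) (W, A) (0, G) = fun n => G *ᵥ (u n + W *ᵥ v n) := by
  cases nonempty_fintype ι
  cases nonempty_fintype ο
  refine fderiv_apply_eq_of_forall_add_smul (differentiable_prediction u v _) fun t => ?_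
  funext n
  simp [prediction, add_mulVec, smul_mulVec]

theorem prediction_sub_mem_range_fderiv {A : Matrix ο μ ℝ} (hA : Function.Surjective A.mulVec)
    (q : Matrix μ κ ℝ × Matrix ο μ ℝ) :
    prediction u v q - prediction u v (W, A) ∈ (fderiv ℝ (prediction u v) (W, A)).range := by
  classical
  cases nonempty_fintype ο
  obtain ⟨B, hB⟩ := mulVec_surjective_iff_exists_right_inverse.mp hA
  have hfst : fderiv ℝ (prediction u v) (W, A) (B * (q.2 * (q.1 - W)), 0) =
      fun n => (q.2 * (q.1 - W)) *ᵥ v n := by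
    rw [fderiv_prediction_apply_fst, ← Matrix.mul_assoc, hB, Matrix.one_mul]
  rw [prediction_sub_prediction, ← hfst, ← fderiv_prediction_apply_snd]
  exact add_mem (LinearMap.mem_range_self _ _) (LinearMap.mem_range_self _ _)

end Prediction

section MeanSquaredError

variable {ι ο : Type*} [Fintype ι] [Fintype ο]

/-- The average squared loss `(1/N) Σ_n ‖o n - y n‖²` of the predictions `o`, with the Euclidean
norm written out in coordinates. -/
noncomputable def meanSquaredError (y o : ι → ο → ℝ) : ℝ :=
  1 / (Fintype.card ι : ℝ) * ∑ n, ∑ j, (o n j - y n j) ^ 2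

theorem convexOn_meanSquaredError (y : ι → ο → ℝ) : ConvexOn ℝ univ (meanSquaredError y) := by
  have hcoord (n : ι) (j : ο) : ConvexOn ℝ univ fun o : ι → ο → ℝ => (o n j - y n j) ^ 2 := by
    have hsq : ConvexOn ℝ univ fun x : ℝ => (x - y n j) ^ 2 := by
      simpa [Function.comp_def, sub_eq_add_neg] using
        (even_two.convexOn_pow (𝕜 := ℝ)).translate_left (-y n j)
    exact hsq.comp_linearMap
      ((LinearMap.proj j : (ο → ℝ) →ₗ[ℝ] ℝ) ∘ₗ (LinearMap.proj n : (ι → ο → ℝ) →ₗ[ℝ] ο → ℝ))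
  exact (convexOn_finset_sum _ convex_univ fun n _ =>
    convexOn_finset_sum _ convex_univ fun j _ => hcoord n j).smul (by positivity)

theorem differentiable_meanSquaredError (y : ι → ο → ℝ) :
    Differentiable ℝ (meanSquaredError y) := by
  unfold meanSquaredError
  fun_prop

end MeanSquaredError

theorem resnest_saddle_point_rank_deficient_general {ι κ μ ο : Type*}
    [Finite ι] [Fintype κ] [Fintype μ] [Fintype ο] (u : ι → μ → ℝ) (v : ι → κ → ℝ)
    {φ : (ι → ο → ℝ) → ℝ} (hφ : ConvexOn ℝ univ φ) (p : Matrix μ κ ℝ × Matrix ο μ ℝ)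
    (hφd : DifferentiableAt ℝ φ (prediction u v p))
    (hcrit : fderiv ℝ (φ ∘ prediction u v) p = 0)
    (hmin : ¬ IsMinOn (φ ∘ prediction u v) univ p) :
    p.2.rank < Fintype.card ο := by
  cases nonempty_fintype ι
  contrapose! hmin
  have hsurj : Function.Surjective p.2.mulVec := mulVec_surjective_of_card_le_rank hmin
  exact isMinOn_comp_of_sub_mem_range_fderiv hφ (mapsTo_univ _ _) (mem_univ p) hφd
    (differentiable_prediction u v p) hcrit
    fun q _ => prediction_sub_mem_range_fderiv u v p.1 hsurj q

theorem resnest_saddle_point_rank_deficient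
    (N L M No : ℕ) (hN : 0 < N) (hL : 1 ≤ L) (hM : 0 < M) (hNo : 0 < No)
    (K : ℕ → ℕ)
    -- fixed matrices W_i ∈ ℝ^{M×K_i}, i = 0, …, L−1
    (W : (i : ℕ) → Matrix (Fin M) (Fin (K i)) ℝ)
    -- feature vectors v_i^n ∈ ℝ^{K_i} and targets y^n ∈ ℝ^{N_o}
    (v : (i : ℕ) → Fin N → Fin (K i) → ℝ)
    (y : Fin N → Fin No → ℝ)
    -- u^n = Σ_{i=0}^{L−1} W_i v_i^n
    (u : Fin N → Fin M → ℝ)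
    (hu : ∀ n, u n = ∑ i ∈ Finset.range L, (W i).mulVec (v i n))
    -- squared loss ℓ(yhat, y) = ‖yhat − y‖²
    (ℓ : (Fin No → ℝ) → (Fin No → ℝ) → ℝ)
    (hℓ : ∀ yhat yy, ℓ yhat yy = ∑ j, (yhat j - yy j) ^ 2)
    -- Assumption 1: Σ_n v_L^n (y^n)^T ≠ 0 and Σ_n v_L^n (v_L^n)^T invertible
    (hA1 : (Matrix.of fun k j => ∑ n, v L n k * y n j :
        Matrix (Fin (K L)) (Fin No) ℝ) ≠ 0)
    (hA1' : IsUnit (Matrix.of fun k k' => ∑ n, v L n k * v L n k' :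
        Matrix (Fin (K L)) (Fin (K L)) ℝ))
    -- Assumption 3: M ≥ N_o
    (hMNo : M ≥ No)
    -- Assumption 4: (c_0, …, c_{L−1}) ↦ Σ_{i=0}^{L−1} W_i c_i is injective
    (hinj : Function.Injective
      (fun c : (i : Fin L) → Fin (K i.val) → ℝ => ∑ i : Fin L, (W i.val).mulVec (c i)))
    -- fixed-feature ResNEst empirical risk
    (R : Matrix (Fin M) (Fin (K L)) ℝ × Matrix (Fin No) (Fin M) ℝ → ℝ)
    (hR : ∀ p, R p =
      (1 / (N : ℝ)) * ∑ n, ℓ (p.2.mulVec (u n + p.1.mulVec (v L n))) (y n))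
    -- a saddle point of R
    (p : Matrix (Fin M) (Fin (K L)) ℝ × Matrix (Fin No) (Fin M) ℝ)
    (hcrit : fderiv ℝ R p = 0)
    (hmin : ¬ IsLocalMin R p) (hmax : ¬ IsLocalMax R p) :
    p.2.rank < No := by
  obtain rfl : R = meanSquaredError y ∘ prediction u (v L) := by
    funext q
    simp only [hR, hℓ, Function.comp_apply, meanSquaredError, prediction, Fintype.card_fin]
  simpa only [Fintype.card_fin] using
    resnest_saddle_point_rank_deficient_general u (v L) (convexOn_meanSquaredError y) p
      (differentiable_meanSquaredError y _) hcrit fun h => hmin (h.isLocalMin Filter.univ_mem)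
end

section
/- Suppose the loss is the squared loss ℓ(ŷ, y) = ‖ŷ − y‖², Assumption 1 holds, M ≥ N_o (Assumption 3), and Assumption 4 holds (the linear map (c_0,…,c_{L−1}) ↦ Σ_{i=0}^{L−1} W_i c_i is injective). Then at every saddle point (W_L*, W_{L+1}*) of the fixed-feature ResNEst empirical risk R there exists at least one direction of strictly negative curvature: there are matrices (D_L, D_{L+1}) ∈ ℝ^{M×K_L} × ℝ^{N_o×M} such that the second derivative at t = 0 of the function t ↦ R(W_L* + t D_L, W_{L+1}* + t D_{L+1}) is strictly negative. -/
/-!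
STATEMENT 10 (Theorem 2(b)): Under the squared loss, Assumption 1, Assumption 3
(M ≥ N_o) and Assumption 4 (injectivity), at every saddle point of the fixed-feature
ResNEst risk `R` there is a direction of strictly negative curvature: there exist
(D_L, D_{L+1}) such that d²/dt² R(W_L* + t D_L, W_{L+1}* + t D_{L+1}) |_{t=0} < 0.
-/

attribute [local instance] Matrix.normedAddCommGroup Matrix.normedSpace

/-!
Put samples in columns and write `X = U + W_L V` and `F = W_{L+1} X - Y` for the residual. The first
order conditions say `X Fᵀ = 0` and `G W_{L+1} = 0`, where `G = V Fᵀ`.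

If `G = 0`, the point is a global minimizer: every reachable prediction is a linear function of the
rows of `X` and `V`, and `F` is orthogonal to all of those. Otherwise some `w = q G` is nonzero. It
satisfies `w W_{L+1} = 0`, so, as `M ≥ N_o`, also `W_{L+1} z = 0` for some `z ≠ 0`. Perturbing `W_L`
by a multiple of `z qᵀ` alone leaves the prediction unchanged; together with the perturbation `w zᵀ`
of `W_{L+1}` it contributes to the curvature a term linear in that multiple, and nothing else
depends on the multiple, so the curvature can be made negative.
-/

section TraceAndKernel

open Matrix

variable {m n R : Type*} [Fintype m] [Fintype n]

theorem trace_transpose_mul_comm [NonUnitalCommSemiring R] (A B : Matrix m n R) :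
    trace (Aᵀ * B) = trace (Bᵀ * A) := by
  rw [← trace_transpose, transpose_mul, transpose_transpose]

theorem trace_transpose_mul_self_eq_sum_sq [CommSemiring R] (A : Matrix m n R) :
    trace (Aᵀ * A) = ∑ j, ∑ i, A i j ^ 2 := by
  simp only [trace, diag_apply, mul_apply, transpose_apply, sq]

theorem trace_transpose_mul_self_nonneg (A : Matrix m n ℝ) : 0 ≤ trace (Aᵀ * A) := by
  rw [trace_transpose_mul_self_eq_sum_sq]
  positivity

theorem trace_transpose_mul_self_add [CommSemiring R] (A B : Matrix m n R) :
    trace ((A + B)ᵀ * (A + B)) =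
      trace (Aᵀ * A) + 2 * trace (Aᵀ * B) + trace (Bᵀ * B) := by
  simp only [transpose_add, Matrix.add_mul, Matrix.mul_add, trace_add]
  rw [trace_transpose_mul_comm B A]
  ring

theorem exists_mulVec_eq_zero_of_vecMul_eq_zero {𝕜 : Type*} [Field 𝕜]
    (hcard : Fintype.card m ≤ Fintype.card n) (B : Matrix m n 𝕜) {w : m → 𝕜} (hw : w ≠ 0)
    (hwB : w ᵥ* B = 0) : ∃ z ≠ 0, B *ᵥ z = 0 := by
  by_contra! hker
  have hinj : Function.Injective B.mulVecLin :=
    (injective_iff_map_eq_zero _).2 fun z hz ↦ by_contra fun hz0 ↦ hker z hz0 hz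
  have hfinrank : Module.finrank 𝕜 (n → 𝕜) = Module.finrank 𝕜 (m → 𝕜) :=
    (LinearMap.finrank_le_finrank_of_injective hinj).antisymm (by simpa using hcard)
  have hsurj : Function.Surjective B.mulVecLin :=
    (LinearMap.injective_iff_surjective_of_finrank_eq_finrank hfinrank).1 hinj
  refine hw (dotProduct_eq_zero w fun x ↦ ?_)
  obtain ⟨z, rfl⟩ := hsurj x
  rw [mulVecLin_apply, dotProduct_mulVec, hwB, zero_dotProduct]

end TraceAndKernel

section PolynomialDerivatives

open Matrix Polynomial

variable {𝕜 : Type*} [NontriviallyNormedField 𝕜]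

theorem iteratedDeriv_polynomial_eval (p : 𝕜[X]) (k : ℕ) :
    iteratedDeriv k (fun t ↦ p.eval t) = fun t ↦ (derivative^[k] p).eval t := by
  induction k with
  | zero => simp only [iteratedDeriv_zero, Function.iterate_zero, id_eq]
  | succ k ih =>
    ext t
    rw [iteratedDeriv_succ, ih, Polynomial.deriv, Function.iterate_succ_apply']

theorem iteratedDeriv_polynomial_eval_zero (p : 𝕜[X]) (k : ℕ) :
    iteratedDeriv k (fun t ↦ p.eval t) 0 = k.factorial * p.coeff k := by
  simp only [iteratedDeriv_polynomial_eval, ← coeff_zero_eq_eval_zero, coeff_iterate_derivative,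
    zero_add, Nat.descFactorial_self, nsmul_eq_mul]

variable {m n : Type*} [Fintype m] [Fintype n]

theorem trace_transpose_mul_self_quadratic_eq_eval {R : Type*} [CommRing R]
    (F A B : Matrix m n R) (t : R) :
    trace ((F + t • A + t ^ 2 • B)ᵀ * (F + t • A + t ^ 2 • B)) =
      (C (trace (Fᵀ * F)) + C (2 * trace (Fᵀ * A)) * X
        + C (trace (Aᵀ * A) + 2 * trace (Fᵀ * B)) * X ^ 2
        + C (2 * trace (Aᵀ * B)) * X ^ 3 + C (trace (Bᵀ * B)) * X ^ 4).eval t := by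
  rw [trace_transpose_mul_self_add, trace_transpose_mul_self_add]
  simp only [transpose_add, transpose_smul, Matrix.add_mul, Matrix.smul_mul, Matrix.mul_smul,
    trace_add, trace_smul, smul_eq_mul, eval_add, eval_mul, eval_C, eval_pow, eval_X]
  ring

theorem deriv_trace_transpose_mul_self_quadratic (F A B : Matrix m n 𝕜) :
    deriv (fun t : 𝕜 ↦ trace ((F + t • A + t ^ 2 • B)ᵀ * (F + t • A + t ^ 2 • B))) 0 =
      2 * trace (Fᵀ * A) := by
  simp only [trace_transpose_mul_self_quadratic_eq_eval, ← iteratedDeriv_one]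
  rw [iteratedDeriv_polynomial_eval_zero]
  simp only [coeff_add, coeff_C_mul, coeff_C, coeff_X, coeff_X_pow]
  norm_num

theorem iteratedDeriv_two_trace_transpose_mul_self_quadratic (F A B : Matrix m n 𝕜) :
    iteratedDeriv 2 (fun t : 𝕜 ↦ trace ((F + t • A + t ^ 2 • B)ᵀ * (F + t • A + t ^ 2 • B))) 0 =
      2 * trace (Aᵀ * A) + 4 * trace (Fᵀ * B) := by
  simp only [trace_transpose_mul_self_quadratic_eq_eval]
  rw [iteratedDeriv_polynomial_eval_zero]
  simp only [coeff_add, coeff_C_mul, coeff_C, coeff_X, coeff_X_pow]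
  norm_num
  ring

end PolynomialDerivatives

section Risk

open Matrix

variable {ι k m o : Type*} [Fintype k] [Fintype m]

/-- The input `U + W_L V` of the last linear layer, one sample per column. -/
def lastLayerInput (U : Matrix m ι ℝ) (V : Matrix k ι ℝ) (A : Matrix m k ℝ) : Matrix m ι ℝ :=
  U + A * V

/-- The prediction error `W_{L+1} (U + W_L V) - Y` at the parameters `p = (W_L, W_{L+1})`, one
sample per column. -/
def resnestResidual (U : Matrix m ι ℝ) (V : Matrix k ι ℝ) (Y : Matrix o ι ℝ)
    (p : Matrix m k ℝ × Matrix o m ℝ) : Matrix o ι ℝ :=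
  p.2 * lastLayerInput U V p.1 - Y

/-- The fixed-feature ResNEst risk for the squared loss as a function of `p = (W_L, W_{L+1})`,
with an arbitrary weight `c` in place of the averaging factor `1 / N`; the trace is the sum of the
squared errors. -/
def resnestRisk [Fintype ι] [Fintype o] (c : ℝ) (U : Matrix m ι ℝ) (V : Matrix k ι ℝ)
    (Y : Matrix o ι ℝ) (p : Matrix m k ℝ × Matrix o m ℝ) : ℝ :=
  c * trace ((resnestResidual U V Y p)ᵀ * resnestResidual U V Y p)

theorem resnestResidual_add_smul (U : Matrix m ι ℝ) (V : Matrix k ι ℝ) (Y : Matrix o ι ℝ)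
    (p D : Matrix m k ℝ × Matrix o m ℝ) (t : ℝ) :
    resnestResidual U V Y (p + t • D) = resnestResidual U V Y p
      + t • (p.2 * D.1 * V + D.2 * lastLayerInput U V p.1) + t ^ 2 • (D.2 * D.1 * V) := by
  simp only [resnestResidual, lastLayerInput, Prod.fst_add, Prod.snd_add, Prod.smul_fst,
    Prod.smul_snd, Matrix.add_mul, Matrix.mul_add, Matrix.smul_mul, Matrix.mul_smul, smul_add,
    smul_smul, Matrix.mul_assoc]
  module

theorem resnestResidual_eq_add (U : Matrix m ι ℝ) (V : Matrix k ι ℝ) (Y : Matrix o ι ℝ)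
    (p q : Matrix m k ℝ × Matrix o m ℝ) :
    resnestResidual U V Y q = resnestResidual U V Y p
      + ((q.2 - p.2) * lastLayerInput U V p.1 + q.2 * (q.1 - p.1) * V) := by
  simp only [resnestResidual, lastLayerInput, Matrix.sub_mul, Matrix.mul_add, Matrix.mul_sub,
    Matrix.mul_assoc]
  abel

variable [Fintype ι] [Fintype o]

theorem resnestRisk_of_transpose (c : ℝ) (u : ι → m → ℝ) (v : ι → k → ℝ) (y : ι → o → ℝ)
    (p : Matrix m k ℝ × Matrix o m ℝ) :
    resnestRisk c (of u)ᵀ (of v)ᵀ (of y)ᵀ p =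
      c * ∑ n, ∑ j, ((p.2 *ᵥ (u n + p.1 *ᵥ v n)) j - y n j) ^ 2 := by
  simp only [resnestRisk, trace_transpose_mul_self_eq_sum_sq]
  rfl

variable (c : ℝ) (U : Matrix m ι ℝ) (V : Matrix k ι ℝ) (Y : Matrix o ι ℝ)

theorem differentiable_resnestRisk : Differentiable ℝ (resnestRisk c U V Y) := by
  unfold resnestRisk
  simp only [trace_transpose_mul_self_eq_sum_sq, resnestResidual, lastLayerInput,
    Matrix.sub_apply, Matrix.add_apply, mul_apply]
  fun_prop

theorem deriv_resnestRisk_line (p D : Matrix m k ℝ × Matrix o m ℝ) :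
    deriv (fun t : ℝ ↦ resnestRisk c U V Y (p + t • D)) 0 =
      c * (2 * trace ((resnestResidual U V Y p)ᵀ *
        (p.2 * D.1 * V + D.2 * lastLayerInput U V p.1))) := by
  simp only [resnestRisk, resnestResidual_add_smul]
  rw [deriv_const_mul_field, deriv_trace_transpose_mul_self_quadratic]

theorem iteratedDeriv_two_resnestRisk_line (p D : Matrix m k ℝ × Matrix o m ℝ) :
    iteratedDeriv 2 (fun t : ℝ ↦ resnestRisk c U V Y (p + t • D)) 0 =
      c * (2 * trace ((p.2 * D.1 * V + D.2 * lastLayerInput U V p.1)ᵀ *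
          (p.2 * D.1 * V + D.2 * lastLayerInput U V p.1))
        + 4 * trace ((resnestResidual U V Y p)ᵀ * (D.2 * D.1 * V))) := by
  simp only [resnestRisk, resnestResidual_add_smul]
  rw [iteratedDeriv_const_mul_field, iteratedDeriv_two_trace_transpose_mul_self_quadratic]

variable {c U V Y} {p : Matrix m k ℝ × Matrix o m ℝ}

theorem trace_resnestResidual_transpose_mul_eq_zero (hc : c ≠ 0)
    (hcrit : fderiv ℝ (resnestRisk c U V Y) p = 0) (D : Matrix m k ℝ × Matrix o m ℝ) :
    trace ((resnestResidual U V Y p)ᵀ * (p.2 * D.1 * V + D.2 * lastLayerInput U V p.1)) = 0 := by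
  have hline : lineDeriv ℝ (resnestRisk c U V Y) p D = 0 := by
    rw [(differentiable_resnestRisk c U V Y p).lineDeriv_eq_fderiv]
    exact DFunLike.congr_fun hcrit D
  rw [lineDeriv, deriv_resnestRisk_line] at hline
  simpa [hc] using hline

theorem lastLayerInput_mul_resnestResidual_transpose_eq_zero (hc : c ≠ 0)
    (hcrit : fderiv ℝ (resnestRisk c U V Y) p = 0) :
    lastLayerInput U V p.1 * (resnestResidual U V Y p)ᵀ = 0 := by
  refine ext_iff_trace_mul_right.2 fun E ↦ ?_
  have hE := trace_resnestResidual_transpose_mul_eq_zero hc hcrit (0, E)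
  rw [Matrix.mul_zero, Matrix.zero_mul, zero_add] at hE
  rw [Matrix.zero_mul, trace_zero, ← trace_mul_cycle, ← hE, Matrix.mul_assoc]

theorem mul_resnestResidual_transpose_mul_eq_zero (hc : c ≠ 0)
    (hcrit : fderiv ℝ (resnestRisk c U V Y) p = 0) :
    V * (resnestResidual U V Y p)ᵀ * p.2 = 0 := by
  refine ext_iff_trace_mul_right.2 fun D ↦ ?_
  have hD := trace_resnestResidual_transpose_mul_eq_zero hc hcrit (D, 0)
  rw [Matrix.zero_mul, add_zero] at hD
  rw [Matrix.zero_mul, trace_zero, Matrix.mul_assoc, ← trace_mul_cycle, ← hD, Matrix.mul_assoc]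

theorem isMinOn_resnestRisk (hc : 0 ≤ c)
    (hinput : lastLayerInput U V p.1 * (resnestResidual U V Y p)ᵀ = 0)
    (hfeature : V * (resnestResidual U V Y p)ᵀ = 0) :
    IsMinOn (resnestRisk c U V Y) Set.univ p := by
  intro q _
  set F := resnestResidual U V Y p with hF
  set X := lastLayerInput U V p.1
  have horth : trace (Fᵀ * ((q.2 - p.2) * X + q.2 * (q.1 - p.1) * V)) = 0 := by
    rw [Matrix.mul_add, trace_add, ← Matrix.mul_assoc, trace_mul_cycle, hinput,
      ← Matrix.mul_assoc, trace_mul_cycle, hfeature, Matrix.zero_mul, Matrix.zero_mul, trace_zero,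
      trace_zero, add_zero]
  refine mul_le_mul_of_nonneg_left ?_ hc
  rw [resnestResidual_eq_add U V Y p q, trace_transpose_mul_self_add, ← hF, horth, mul_zero,
    add_zero]
  exact le_add_of_nonneg_right (trace_transpose_mul_self_nonneg _)

theorem exists_iteratedDeriv_two_resnestRisk_neg (hc : 0 < c) {z : m → ℝ} (hz : z ≠ 0)
    (hpz : p.2 *ᵥ z = 0) {q : k → ℝ} (hq : q ᵥ* (V * (resnestResidual U V Y p)ᵀ) ≠ 0) :
    ∃ D : Matrix m k ℝ × Matrix o m ℝ,
      iteratedDeriv 2 (fun t : ℝ ↦ resnestRisk c U V Y (p + t • D)) 0 < 0 := by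
  set F := resnestResidual U V Y p with hF
  set w := q ᵥ* (V * Fᵀ) with hw
  set P := vecMulVec w z * lastLayerInput U V p.1 with hP
  set a := trace (Pᵀ * P)
  set b := (z ⬝ᵥ z) * (w ⬝ᵥ w)
  have ha_nonneg : 0 ≤ a := trace_transpose_mul_self_nonneg P
  have hb_pos : 0 < b := mul_pos (by simpa using dotProduct_star_self_pos_iff.2 hz)
    (by simpa using dotProduct_star_self_pos_iff.2 hq)
  have hfirst (s : ℝ) : p.2 * (s • vecMulVec z q) * V = 0 := by
    rw [Matrix.mul_smul, mul_vecMulVec, hpz, zero_vecMulVec, smul_zero, Matrix.zero_mul]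
  have hcross : trace (Fᵀ * (vecMulVec w z * vecMulVec z q * V)) = b := by
    rw [← Matrix.mul_assoc, trace_mul_cycle, vecMulVec_mul_vecMulVec, mul_vecMulVec,
      trace_vecMulVec, dotProduct_smul, dotProduct_comm _ q, dotProduct_mulVec, ← hw, smul_eq_mul]
  refine ⟨(-((a + 1) / b) • vecMulVec z q, vecMulVec w z), ?_⟩
  rw [iteratedDeriv_two_resnestRisk_line, hfirst, zero_add, ← hP, ← hF, Matrix.mul_smul,
    Matrix.smul_mul, Matrix.mul_smul, trace_smul, hcross, smul_eq_mul, neg_mul,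
    div_mul_cancel₀ _ hb_pos.ne']
  exact mul_neg_of_pos_of_neg hc (by linarith)

theorem resnest_saddle_point_negative_curvature_general {ι k m o : Type*} [Fintype ι] [Fintype k]
    [Fintype m] [Fintype o] {c : ℝ} (hc : 0 < c) {U : Matrix m ι ℝ} {V : Matrix k ι ℝ}
    {Y : Matrix o ι ℝ} {p : Matrix m k ℝ × Matrix o m ℝ}
    (hcard : Fintype.card o ≤ Fintype.card m)
    (hcrit : fderiv ℝ (resnestRisk c U V Y) p = 0)
    (hmin : ¬ IsMinOn (resnestRisk c U V Y) Set.univ p) :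
    ∃ D : Matrix m k ℝ × Matrix o m ℝ,
      iteratedDeriv 2 (fun t : ℝ ↦ resnestRisk c U V Y (p + t • D)) 0 < 0 := by
  have hG : V * (resnestResidual U V Y p)ᵀ ≠ 0 := fun hG ↦ hmin <|
    isMinOn_resnestRisk hc.le (lastLayerInput_mul_resnestResidual_transpose_eq_zero hc.ne' hcrit) hG
  obtain ⟨q, hq⟩ : ∃ q : k → ℝ, q ᵥ* (V * (resnestResidual U V Y p)ᵀ) ≠ 0 := by
    by_contra! h
    exact hG (ext_iff_vecMul.2 fun q ↦ (h q).trans (vecMul_zero q).symm)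
  have hqp : q ᵥ* (V * (resnestResidual U V Y p)ᵀ) ᵥ* p.2 = 0 := by
    rw [vecMul_vecMul, mul_resnestResidual_transpose_mul_eq_zero hc.ne' hcrit, vecMul_zero]
  obtain ⟨z, hz, hpz⟩ := exists_mulVec_eq_zero_of_vecMul_eq_zero hcard p.2 hq hqp
  exact exists_iteratedDeriv_two_resnestRisk_neg hc hz hpz hq

end Risk

theorem resnest_saddle_point_negative_curvature
    (N L M No : ℕ) (hN : 0 < N) (hL : 1 ≤ L) (hM : 0 < M) (hNo : 0 < No)
    (K : ℕ → ℕ)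
    -- fixed matrices W_i ∈ ℝ^{M×K_i}, i = 0, …, L−1
    (W : (i : ℕ) → Matrix (Fin M) (Fin (K i)) ℝ)
    -- feature vectors v_i^n ∈ ℝ^{K_i} and targets y^n ∈ ℝ^{N_o}
    (v : (i : ℕ) → Fin N → Fin (K i) → ℝ)
    (y : Fin N → Fin No → ℝ)
    -- u^n = Σ_{i=0}^{L−1} W_i v_i^n
    (u : Fin N → Fin M → ℝ)
    (hu : ∀ n, u n = ∑ i ∈ Finset.range L, (W i).mulVec (v i n))
    -- squared loss ℓ(yhat, y) = ‖yhat − y‖²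
    (ℓ : (Fin No → ℝ) → (Fin No → ℝ) → ℝ)
    (hℓ : ∀ yhat yy, ℓ yhat yy = ∑ j, (yhat j - yy j) ^ 2)
    -- Assumption 1: Σ_n v_L^n (y^n)^T ≠ 0 and Σ_n v_L^n (v_L^n)^T invertible
    (hA1 : (Matrix.of fun k j => ∑ n, v L n k * y n j :
        Matrix (Fin (K L)) (Fin No) ℝ) ≠ 0)
    (hA1' : IsUnit (Matrix.of fun k k' => ∑ n, v L n k * v L n k' :
        Matrix (Fin (K L)) (Fin (K L)) ℝ))
    -- Assumption 3: M ≥ N_o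
    (hMNo : M ≥ No)
    -- Assumption 4: (c_0, …, c_{L−1}) ↦ Σ_{i=0}^{L−1} W_i c_i is injective
    (hinj : Function.Injective
      (fun c : (i : Fin L) → Fin (K i.val) → ℝ => ∑ i : Fin L, (W i.val).mulVec (c i)))
    -- fixed-feature ResNEst empirical risk
    (R : Matrix (Fin M) (Fin (K L)) ℝ × Matrix (Fin No) (Fin M) ℝ → ℝ)
    (hR : ∀ p, R p =
      (1 / (N : ℝ)) * ∑ n, ℓ (p.2.mulVec (u n + p.1.mulVec (v L n))) (y n))
    -- a saddle point of R
    (p : Matrix (Fin M) (Fin (K L)) ℝ × Matrix (Fin No) (Fin M) ℝ)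
    (hcrit : fderiv ℝ R p = 0)
    (hmin : ¬ IsLocalMin R p) (hmax : ¬ IsLocalMax R p) :
    ∃ D : Matrix (Fin M) (Fin (K L)) ℝ × Matrix (Fin No) (Fin M) ℝ,
      iteratedDeriv 2 (fun t : ℝ => R (p.1 + t • D.1, p.2 + t • D.2)) 0 < 0 := by
  obtain rfl : R = resnestRisk (1 / N) (Matrix.of u).transpose (Matrix.of (v L)).transpose
      (Matrix.of y).transpose :=
    funext fun p ↦ by simp only [hR, hℓ, resnestRisk_of_transpose]
  exact resnest_saddle_point_negative_curvature_general (by positivity) (by simpa using hMNo) hcrit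
    fun h ↦ hmin (.of_forall fun q ↦ h (Set.mem_univ q))
end

section
/- Let 1 ≤ i ≤ L and suppose the feature v_i is linearly predictable from the earlier features on the data: there exist matrices C_j ∈ ℝ^{K_i×K_j} for j = 0,…,i−1 such that v_i^n = Σ_{j=0}^{i−1} C_j v_j^n for every n = 1,…,N. Then the best A-ResNEst risk using the first i+1 features equals the best A-ResNEst risk using only the first i features: the infimum over (H_0,…,H_i) ∈ ℝ^{N_o×K_0}×⋯×ℝ^{N_o×K_i} of (1/N) Σ_{n=1}^N ℓ(Σ_{j=0}^{i} H_j v_j^n, y^n) equals the infimum over (H_0,…,H_{i−1}) of (1/N) Σ_{n=1}^N ℓ(Σ_{j=0}^{i−1} H_j v_j^n, y^n). Consequently, a strict improvement of the residual representation at block i requires v_i to be linearly unpredictable from v_0,…,v_{i−1}. -/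
/-!
Linear predictability is transitive, since a linear readout of linear readouts is again a linear
readout. Hence adjoining a predictable feature does not change the set of predictions on the data
that linear readouts can realize. The risk depends on the readout matrices only through these
predictions, so both infima are taken over the same set of values. In particular they agree even
when the risk is unbounded below, where the infimum in `ℝ` takes its junk value `0`.
-/

open Matrix

section LinearReadout

variable {R σ ι o : Type*} [Semiring R] [Fintype ι] {κ : ι → Type*} [∀ j, Fintype (κ j)]

/-- The predictions made from the features `v j`, sampled over `σ`, by the readout matrices `H j`:
the output of an A-ResNEst on the data. -/
def linearReadout (v : ∀ j, σ → κ j → R) (H : ∀ j, Matrix o (κ j) R) : σ → o → R :=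
  fun n => ∑ j, H j *ᵥ v j n

/-- A feature `f` is linearly predictable from the features `v j` if some linear readout of them
agrees with `f` on every sample. The matrices do not depend on the sample. -/
def LinearlyPredictable (v : ∀ j, σ → κ j → R) (f : σ → o → R) : Prop :=
  ∃ C, linearReadout v C = f

theorem linearReadout_linearReadout {ι' : Type*} [Fintype ι'] {κ' : ι' → Type*}
    [∀ i, Fintype (κ' i)] (v : ∀ j, σ → κ j → R) (C : ∀ i j, Matrix (κ' i) (κ j) R)
    (H : ∀ i, Matrix o (κ' i) R) :
    linearReadout (fun i => linearReadout v (C i)) H =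
      linearReadout v fun j => ∑ i, H i * C i j := by
  funext n
  simp only [linearReadout, mulVec_sum, sum_mulVec, mulVec_mulVec]
  exact Finset.sum_comm

theorem LinearlyPredictable.trans {ι' : Type*} [Fintype ι'] {κ' : ι' → Type*}
    [∀ i, Fintype (κ' i)] {v : ∀ j, σ → κ j → R} {w : ∀ i, σ → κ' i → R} {f : σ → o → R}
    (hw : ∀ i, LinearlyPredictable v (w i)) (hf : LinearlyPredictable w f) :
    LinearlyPredictable v f := by
  choose C hC using hw
  obtain ⟨H, rfl⟩ := hf
  obtain rfl : (fun i => linearReadout v (C i)) = w := funext hC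
  exact ⟨_, (linearReadout_linearReadout v C H).symm⟩

theorem linearlyPredictable_self (v : ∀ j, σ → κ j → R) (j : ι) :
    LinearlyPredictable v (v j) := by
  classical
  refine ⟨Pi.single j 1, funext fun n => ?_⟩
  rw [linearReadout, Fintype.sum_eq_single j fun k hk => by rw [Pi.single_eq_of_ne hk, zero_mulVec],
    Pi.single_eq_same, one_mulVec]

theorem range_linearReadout_comp {ι' : Type*} [Fintype ι'] (v : ∀ j, σ → κ j → R) (e : ι' → ι)
    (h : ∀ j, LinearlyPredictable (fun i => v (e i)) (v j)) :
    Set.range (linearReadout (o := o) fun i => v (e i)) = Set.range (linearReadout v) :=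
  Set.Subset.antisymm
    (fun _ hf => LinearlyPredictable.trans (fun i => linearlyPredictable_self v (e i)) hf)
    (fun _ hf => LinearlyPredictable.trans h hf)

end LinearReadout

theorem range_linearReadout_castSucc {R σ o : Type*} [Semiring R] {k : ℕ}
    {κ : Fin (k + 1) → Type*} [∀ j, Fintype (κ j)] (v : ∀ j, σ → κ j → R)
    (h : LinearlyPredictable (fun j : Fin k => v j.castSucc) (v (Fin.last k))) :
    Set.range (linearReadout (o := o) fun j : Fin k => v j.castSucc) =
      Set.range (linearReadout v) :=
  range_linearReadout_comp v Fin.castSucc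
    (Fin.lastCases h (linearlyPredictable_self fun j : Fin k => v j.castSucc))

theorem aresnest_linearly_predictable_feature_no_improvement_general
    {R σ o α : Type*} [Semiring R] [InfSet α] {k : ℕ} {κ : Fin (k + 1) → Type*}
    [∀ j, Fintype (κ j)] (v : ∀ j, σ → κ j → R) (risk : (σ → o → R) → α)
    (h : LinearlyPredictable (fun j : Fin k => v j.castSucc) (v (Fin.last k))) :
    ⨅ H, risk (linearReadout v H) =
      ⨅ H, risk (linearReadout (fun j : Fin k => v j.castSucc) H) := by
  rw [← iInf_range' risk (linearReadout v), ← iInf_range' risk (linearReadout _),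
    range_linearReadout_castSucc v h]

/-!
STATEMENT 13: If the feature v_i is linearly predictable from v_0, …, v_{i−1} on the
data, then the best A-ResNEst risk using the first i+1 features equals the best
A-ResNEst risk using only the first i features, i.e., the residual representation is
not strictly improved at block i.
-/

theorem aresnest_linearly_predictable_feature_no_improvement
    (N L No : ℕ) (hN : 0 < N) (hL : 1 ≤ L) (hNo : 0 < No)
    (K : ℕ → ℕ)
    -- feature vectors v_j^n ∈ ℝ^{K_j} and targets y^n ∈ ℝ^{N_o}
    (v : (j : ℕ) → Fin N → Fin (K j) → ℝ)
    (y : Fin N → Fin No → ℝ)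
    -- the loss function
    (ℓ : (Fin No → ℝ) → (Fin No → ℝ) → ℝ)
    -- a block index 1 ≤ i ≤ L
    (i : ℕ) (hi1 : 1 ≤ i) (hiL : i ≤ L)
    -- v_i is linearly predictable from v_0, …, v_{i−1} on the data:
    -- v_i^n = Σ_{j=0}^{i−1} C_j v_j^n for all n
    (C : (j : ℕ) → Matrix (Fin (K i)) (Fin (K j)) ℝ)
    (hpred : ∀ n, v i n = ∑ j ∈ Finset.range i, (C j).mulVec (v j n)) :
    (⨅ H : (j : Fin (i + 1)) → Matrix (Fin No) (Fin (K j.val)) ℝ,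
        (1 / (N : ℝ)) * ∑ n, ℓ (∑ j : Fin (i + 1), (H j).mulVec (v j.val n)) (y n))
      = ⨅ H : (j : Fin i) → Matrix (Fin No) (Fin (K j.val)) ℝ,
        (1 / (N : ℝ)) * ∑ n, ℓ (∑ j : Fin i, (H j).mulVec (v j.val n)) (y n) :=
  aresnest_linearly_predictable_feature_no_improvement_general (fun j : Fin (i + 1) => v j)
    (fun f => (1 / (N : ℝ)) * ∑ n, ℓ (f n) (y n))
    ⟨fun j => C j, funext fun n => ((hpred n).trans (Finset.sum_range _)).symm⟩
end
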